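/- arXiv:math/0511145 — 2 statements merged into one kernel-verified Lean document; each statement's English description precedes it below -/
import Mathlib

section
/- Let d = 1 or d ≥ 3 and s > d/2 an integer. There exists a function 𝒞 such that for all φ ∈ H^{s+1}(ℝᵈ) and all vector fields v ∈ H^{s+1}(ℝᵈ), ‖∇v‖_{H^s} ≤ 𝒞(‖φ‖_{H^{s+1}}) (‖div v‖_{H^s} + ‖curl(e^φ v)‖_{H^s}). -/
open MeasureTheory SchwartzMap
open scoped FourierTransform Real

noncomputable section

abbrev Euc (d : ℕ) := EuclideanSpace ℝ (Fin d)

/-- Square of the `H^s` norm via the Fourier transform. -/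
def hNormSq (d : ℕ) (s : ℝ) (u : Euc d → ℂ) : ℝ :=
  ∫ ξ : Euc d, (1 + ‖ξ‖ ^ 2) ^ s * ‖𝓕 u ξ‖ ^ 2

def hNorm (d : ℕ) (s : ℝ) (u : Euc d → ℂ) : ℝ := Real.sqrt (hNormSq d s u)

/-- `i`-th partial derivative. -/
def pd (d : ℕ) (i : Fin d) (u : Euc d → ℂ) : Euc d → ℂ :=
  fun x => fderiv ℝ u x (EuclideanSpace.single i 1)

/-- `H^s` norm of the full gradient of a scalar function. -/
def gradHNorm (d : ℕ) (s : ℝ) (u : Euc d → ℂ) : ℝ :=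
  Real.sqrt (∑ i, hNormSq d s (pd d i u))

/-! ### Part 1: Schwartz function basics -/

/-- pointwise product of Schwartz functions -/
def sm {d : ℕ} (a b : 𝓢(Euc d, ℂ)) : 𝓢(Euc d, ℂ) :=
  SchwartzMap.pairing (ContinuousLinearMap.mul ℂ ℂ) a b

lemma sm_apply {d : ℕ} (a b : 𝓢(Euc d, ℂ)) (x : Euc d) : sm a b x = a x * b x := by
  simp [sm, SchwartzMap.pairing_apply_apply]

/-- partial derivative of Schwartz functions -/
def sd {d : ℕ} (i : Fin d) (a : 𝓢(Euc d, ℂ)) : 𝓢(Euc d, ℂ) :=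
  LineDeriv.lineDerivOp (EuclideanSpace.single i (1 : ℝ)) a

lemma sd_coe {d : ℕ} (i : Fin d) (a : 𝓢(Euc d, ℂ)) : (⇑(sd i a) : Euc d → ℂ) = pd d i a := by
  funext x
  simp [sd, pd, SchwartzMap.lineDerivOp_apply_eq_fderiv]

lemma fourier_sd {d : ℕ} (i : Fin d) (a : 𝓢(Euc d, ℂ)) (ξ : Euc d) :
    𝓕 (sd i a) ξ = (2 * π * Complex.I) * ((ξ i : ℂ) * 𝓕 a ξ) := by
  have hg : (fun x : Euc d => inner ℝ x (EuclideanSpace.single i (1 : ℝ))).HasTemperateGrowth := by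
    fun_prop
  rw [sd, SchwartzMap.fourier_lineDerivOp_eq]
  rw [smul_apply, SchwartzMap.smulLeftCLM_apply_apply hg]
  simp [EuclideanSpace.inner_single_right]

/-- weighted Fourier energy -/
def Nw {d : ℕ} (m : Euc d → ℝ) (u : 𝓢(Euc d, ℂ)) : ℝ := ∫ ξ, m ξ * ‖𝓕 u ξ‖ ^ 2

/-- admissible weights -/
structure Adm {d : ℕ} (m : Euc d → ℝ) : Prop where
  cont : Continuous m
  nonneg : ∀ ξ, 0 ≤ m ξ
  bound : ∃ k : ℕ, ∀ ξ, m ξ ≤ (1 + ‖ξ‖ ^ 2) ^ k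

lemma schwartz_integ {d : ℕ} {m : Euc d → ℝ} (hm : Adm m) (f g : 𝓢(Euc d, ℂ)) :
    Integrable (fun ξ => m ξ * (‖f ξ‖ * ‖g ξ‖)) := by
  obtain ⟨k, hk⟩ := hm.bound
  have hg : (fun x : Euc d => (1 + ‖x‖ ^ 2) ^ (k : ℝ)).HasTemperateGrowth :=
    Function.hasTemperateGrowth_one_add_norm_sq_rpow (Euc d) (k : ℝ)
  have h1 := (SchwartzMap.smulLeftCLM ℂ (fun x : Euc d => (1 + ‖x‖ ^ 2) ^ (k : ℝ)) f).integrable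
    (μ := (volume : Measure (Euc d)))
  have h2 := h1.norm.mul_const (SchwartzMap.seminorm ℝ 0 0 g)
  refine h2.mono' ?_ (Filter.Eventually.of_forall fun ξ => ?_)
  · exact (hm.cont.mul (f.continuous.norm.mul g.continuous.norm)).aestronglyMeasurable
  · have h3 := SchwartzMap.norm_le_seminorm ℝ g ξ
    have h4 := hk ξ
    have h5 := hm.nonneg ξ
    rw [SchwartzMap.smulLeftCLM_apply_apply hg]
    have h6 : (0:ℝ) ≤ (1 + ‖ξ‖ ^ 2) ^ k := by positivity
    rw [Real.rpow_natCast, norm_smul, Real.norm_of_nonneg h6, Real.norm_of_nonneg (by positivity),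
      ← mul_assoc]
    gcongr

lemma schwartz_integ_sq {d : ℕ} {m : Euc d → ℝ} (hm : Adm m) (f : 𝓢(Euc d, ℂ)) :
    Integrable (fun ξ => m ξ * ‖f ξ‖ ^ 2) := by
  simpa [sq] using schwartz_integ hm f f

lemma Nw_nonneg {d : ℕ} {m : Euc d → ℝ} (hm : Adm m) (u : 𝓢(Euc d, ℂ)) : 0 ≤ Nw m u :=
  integral_nonneg fun ξ => mul_nonneg (hm.nonneg ξ) (by positivity)

lemma Nw_add {d : ℕ} {m : Euc d → ℝ} (hm : Adm m) (u v : 𝓢(Euc d, ℂ)) :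
    Nw m (u + v) ≤ 2 * Nw m u + 2 * Nw m v := by
  unfold Nw
  rw [← integral_const_mul, ← integral_const_mul, ← integral_add
    ((schwartz_integ_sq hm _).const_mul _) ((schwartz_integ_sq hm _).const_mul _)]
  refine integral_mono (schwartz_integ_sq hm _)
    (((schwartz_integ_sq hm _).const_mul _).add ((schwartz_integ_sq hm _).const_mul _)) fun ξ => ?_
  simp only [FourierTransform.fourier_add, add_apply]
  have h1 := norm_add_le (𝓕 u ξ) (𝓕 v ξ)
  have h2 : ‖𝓕 u ξ + 𝓕 v ξ‖ ^ 2 ≤ 2 * ‖𝓕 u ξ‖ ^ 2 + 2 * ‖𝓕 v ξ‖ ^ 2 := by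
    nlinarith [sq_nonneg (‖𝓕 u ξ‖ - ‖𝓕 v ξ‖), norm_nonneg (𝓕 u ξ + 𝓕 v ξ), norm_nonneg (𝓕 u ξ),
      norm_nonneg (𝓕 v ξ)]
  nlinarith [mul_le_mul_of_nonneg_left h2 (hm.nonneg ξ)]

lemma Nw_neg {d : ℕ} (m : Euc d → ℝ) (u : 𝓢(Euc d, ℂ)) : Nw m (-u) = Nw m u := by
  unfold Nw
  have : 𝓕 (-u) = - 𝓕 u := by
    simp
  simp [this]

lemma Nw_mono {d : ℕ} {m m' : Euc d → ℝ} (hm : Adm m) (hm' : Adm m') (h : ∀ ξ, m ξ ≤ m' ξ)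
    (u : 𝓢(Euc d, ℂ)) : Nw m u ≤ Nw m' u := by
  refine integral_mono (schwartz_integ_sq hm _) (schwartz_integ_sq hm' _) fun ξ => ?_
  exact mul_le_mul_of_nonneg_right (h ξ) (by positivity)

/-- weights -/
def wH (d s : ℕ) : Euc d → ℝ := fun ξ => (1 + ‖ξ‖ ^ 2) ^ s
def wG (d s : ℕ) : Euc d → ℝ := fun ξ => ‖ξ‖ ^ 2 * (1 + ‖ξ‖ ^ 2) ^ s
def wZ (d s : ℕ) : Euc d → ℝ := fun ξ => ‖ξ‖ ^ 2 / (1 + ‖ξ‖ ^ 2) * (1 + ‖ξ‖ ^ 2) ^ s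
def wL (d : ℕ) : Euc d → ℝ := fun _ => 1

lemma adm_H (d s : ℕ) : Adm (wH d s) :=
  ⟨by unfold wH; fun_prop, fun ξ => by unfold wH; positivity, s, fun ξ => le_rfl⟩
lemma adm_L (d : ℕ) : Adm (wL d) :=
  ⟨by unfold wL; fun_prop, fun ξ => by unfold wL; positivity, 0, fun ξ => by simp [wL]⟩
lemma wG_le (d s : ℕ) (ξ : Euc d) : wG d s ξ ≤ wH d (s + 1) ξ := by
  unfold wG wH
  have h : (0:ℝ) ≤ (1 + ‖ξ‖ ^ 2) ^ s := by positivity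
  rw [pow_succ (1 + ‖ξ‖ ^ 2) s]
  nlinarith
lemma adm_G (d s : ℕ) : Adm (wG d s) :=
  ⟨by unfold wG; fun_prop, fun ξ => by unfold wG; positivity, s + 1, wG_le d s⟩
lemma wZ_le (d s : ℕ) (ξ : Euc d) : wZ d s ξ ≤ wH d s ξ := by
  unfold wZ wH
  have : ‖ξ‖ ^ 2 / (1 + ‖ξ‖ ^ 2) ≤ 1 := by rw [div_le_one (by positivity)]; linarith
  have h : (0:ℝ) ≤ (1 + ‖ξ‖ ^ 2) ^ s := by positivity
  nlinarith
lemma wZ_le_G (d s : ℕ) (ξ : Euc d) : wZ d s ξ ≤ wG d s ξ := by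
  unfold wZ wG
  gcongr
  exact div_le_self (by positivity) (by nlinarith [sq_nonneg ‖ξ‖])
lemma adm_Z (d s : ℕ) : Adm (wZ d s) :=
  ⟨by unfold wZ; exact ((continuous_norm.pow 2).div (by fun_prop) (fun x => by positivity)).mul
        (by fun_prop), fun ξ => by unfold wZ; positivity, s, wZ_le d s⟩

lemma hNormSq_eq (d s : ℕ) (u : 𝓢(Euc d, ℂ)) : hNormSq d s u = Nw (wH d s) u := by
  unfold hNormSq Nw wH
  simp only [Real.rpow_natCast, SchwartzMap.fourier_coe]

/-- sum over components of the derivative energies -/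
lemma sum_sd (d s : ℕ) (u : 𝓢(Euc d, ℂ)) :
    ∑ i, Nw (wH d s) (sd i u) = 4 * π ^ 2 * Nw (wG d s) u := by
  unfold Nw
  rw [← integral_finsetSum _ (fun i _ => schwartz_integ_sq (adm_H d s) _), ← integral_const_mul]
  congr 1
  funext ξ
  simp only [fourier_sd, wH, wG, norm_mul, mul_pow, Complex.norm_I, Complex.norm_real,
    Complex.norm_ofNat, EuclideanSpace.norm_sq_eq ξ, Real.norm_eq_abs, sq_abs]
  rw [Finset.sum_mul, Finset.sum_mul, Finset.mul_sum]
  refine Finset.sum_congr rfl fun i _ => ?_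
  ring

/-- interpolation -/
lemma interp (d s : ℕ) (δ : ℝ) (hδ : 0 < δ) (u : 𝓢(Euc d, ℂ)) :
    Nw (wH d s) u ≤ δ * Nw (wG d s) u + (1 + 1 / δ) ^ s * Nw (wL d) u := by
  unfold Nw
  rw [← integral_const_mul, ← integral_const_mul, ← integral_add
    ((schwartz_integ_sq (adm_G d s) _).const_mul _) ((schwartz_integ_sq (adm_L d) _).const_mul _)]
  refine integral_mono (schwartz_integ_sq (adm_H d s) _)
    (((schwartz_integ_sq (adm_G d s) _).const_mul _).add
      ((schwartz_integ_sq (adm_L d) _).const_mul _)) fun ξ => ?_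
  have key : wH d s ξ ≤ δ * wG d s ξ + (1 + 1 / δ) ^ s * wL d ξ := by
    unfold wH wG wL
    have hp : (0:ℝ) ≤ (1 + ‖ξ‖ ^ 2) ^ s := by positivity
    by_cases h : 1 / δ ≤ ‖ξ‖ ^ 2
    · have h1 : 1 ≤ δ * ‖ξ‖ ^ 2 := by
        rw [div_le_iff₀ hδ] at h; linarith
      have h2 : (0:ℝ) ≤ (1 + 1 / δ) ^ s := by positivity
      nlinarith
    · push Not at h
      have h2 : (1 + ‖ξ‖ ^ 2) ^ s ≤ (1 + 1 / δ) ^ s := by gcongr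
      have h3 : 0 ≤ δ * (‖ξ‖ ^ 2 * (1 + ‖ξ‖ ^ 2) ^ s) := by positivity
      linarith
  nlinarith [mul_le_mul_of_nonneg_right key (sq_nonneg ‖𝓕 u ξ‖)]

/-- `L²` energy in physical space -/
lemma NwL_eq (d : ℕ) (u : 𝓢(Euc d, ℂ)) : Nw (wL d) u = ∫ x, ‖u x‖ ^ 2 := by
  unfold Nw wL
  simp only [one_mul]
  exact SchwartzMap.integral_norm_sq_fourier u

lemma integrable_W_inv (d s : ℕ) (hs : (d : ℝ) / 2 < s) :
    Integrable (fun ξ : Euc d => ((1 + ‖ξ‖ ^ 2) ^ s)⁻¹) := by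
  have := integrable_rpow_neg_one_add_norm_sq (E := Euc d) (μ := volume) (r := 2 * s)
    (by simp; linarith)
  refine this.congr (Filter.Eventually.of_forall fun ξ => ?_)
  simp only
  rw [show -(2 * (s:ℝ)) / 2 = -(s:ℝ) by ring, Real.rpow_neg (by positivity), Real.rpow_natCast]

lemma sup_bound (d s : ℕ) (hs : (d : ℝ) / 2 < s) : ∃ J : ℝ, 0 ≤ J ∧ ∀ (u : 𝓢(Euc d, ℂ)) (x : Euc d),
    ‖u x‖ ≤ J + Nw (wH d s) u := by
  refine ⟨∫ ξ : Euc d, ((1 + ‖ξ‖ ^ 2) ^ s)⁻¹, integral_nonneg fun ξ => by positivity, fun u x => ?_⟩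
  have h1 : u x = 𝓕⁻ (𝓕 u) x := by simp
  rw [h1, SchwartzMap.fourierInv_coe, Real.fourierInv_eq]
  refine (norm_integral_le_integral_norm _).trans ?_
  unfold Nw
  rw [← integral_add (integrable_W_inv d s hs) (schwartz_integ_sq (adm_H d s) _)]
  refine integral_mono ?_ ((integrable_W_inv d s hs).add (schwartz_integ_sq (adm_H d s) _))
    fun ξ => ?_
  · simp only [Circle.norm_smul]
    exact (𝓕 u).integrable.norm
  · simp only [Circle.norm_smul, wH]
    have hp : (0:ℝ) < (1 + ‖ξ‖ ^ 2) ^ s := by positivity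
    generalize (1 + ‖ξ‖ ^ 2) ^ s = W at hp
    generalize ‖𝓕 u ξ‖ = y
    have : 0 ≤ W⁻¹ * ((W * y) ^ 2 - W * y + 1) := by
      have : 0 ≤ (W * y) ^ 2 - W * y + 1 := by nlinarith [sq_nonneg (W * y - 1/2)]
      positivity
    have e : W⁻¹ * ((W * y) ^ 2 - W * y + 1) = W⁻¹ + W * y ^ 2 - y := by
      field_simp
      ring
    linarith

/-! ### Part 2: the product estimate -/

lemma integrableOn_inv_sq (d : ℕ) (hd : 3 ≤ d) :
    IntegrableOn (fun η : Euc d => (‖η‖ ^ 2)⁻¹) (Metric.ball 0 1) := by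
  have : Nontrivial (Euc d) := by
    have : Nonempty (Fin d) := ⟨⟨0, by omega⟩⟩
    infer_instance
  rw [integrableOn_fun_norm_addHaar (μ := (volume : Measure (Euc d))) (f := fun y : ℝ => (y ^ 2)⁻¹)]
  have h : IntegrableOn (fun y : ℝ => y ^ (d - 3)) (Set.Ioo 0 1) :=
    ((continuous_pow (d - 3)).integrableOn_Icc (a := (0:ℝ)) (b := 1)).mono_set
      Set.Ioo_subset_Icc_self
  refine h.congr_fun (fun y hy => ?_) measurableSet_Ioo
  have hy0 : y ≠ 0 := hy.1.ne'
  have : Module.finrank ℝ (Euc d) - 1 = (d - 3) + 2 := by simp; omega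
  rw [this]
  simp only [smul_eq_mul, pow_add]
  field_simp

/-- the kernel of the product estimate -/
def kerK (d s : ℕ) (ξ η : Euc d) : ℝ := wH d s ξ * (wH d s (ξ - η))⁻¹ * (wZ d s η)⁻¹

lemma kerK_le (d s : ℕ) (ξ η : Euc d) : kerK d s ξ η ≤ 4 ^ s * (2 * ((1 + ‖η‖ ^ 2) ^ s)⁻¹
    + 2 * ((1 + ‖ξ - η‖ ^ 2) ^ s)⁻¹
    + 2 * (Metric.ball (0 : Euc d) 1).indicator (fun η : Euc d => (‖η‖ ^ 2)⁻¹) η) := by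
  have hind : 0 ≤ (Metric.ball (0 : Euc d) 1).indicator (fun η : Euc d => (‖η‖ ^ 2)⁻¹) η :=
    Set.indicator_nonneg (fun _ _ => by positivity) _
  by_cases h0 : η = 0
  · have : kerK d s ξ η = 0 := by simp [kerK, wZ, h0]
    rw [this]
    positivity
  have hη : 0 < ‖η‖ := norm_pos_iff.2 h0
  set A : ℝ := (1 + ‖ξ - η‖ ^ 2) ^ s with hA
  set B : ℝ := (1 + ‖η‖ ^ 2) ^ s with hB
  have hA0 : 1 ≤ A := one_le_pow₀ (by nlinarith [sq_nonneg ‖ξ - η‖])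
  have hB0 : 1 ≤ B := one_le_pow₀ (by nlinarith [sq_nonneg ‖η‖])
  have h1 : wH d s ξ ≤ 4 ^ s * (A + B) := by
    have htri : ‖ξ‖ ≤ ‖ξ - η‖ + ‖η‖ := by simpa using norm_add_le (ξ - η) η
    have h2 : 1 + ‖ξ‖ ^ 2 ≤ 4 * max (1 + ‖ξ - η‖ ^ 2) (1 + ‖η‖ ^ 2) := by
      have := le_max_left (1 + ‖ξ - η‖ ^ 2) (1 + ‖η‖ ^ 2)
      have := le_max_right (1 + ‖ξ - η‖ ^ 2) (1 + ‖η‖ ^ 2)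
      nlinarith [sq_nonneg (‖ξ - η‖ - ‖η‖), norm_nonneg ξ]
    calc wH d s ξ ≤ (4 * max (1 + ‖ξ - η‖ ^ 2) (1 + ‖η‖ ^ 2)) ^ s := by
          unfold wH; gcongr
      _ = 4 ^ s * (max (1 + ‖ξ - η‖ ^ 2) (1 + ‖η‖ ^ 2)) ^ s := by rw [mul_pow]
      _ ≤ 4 ^ s * (A + B) := by
          gcongr
          rcases max_cases (1 + ‖ξ - η‖ ^ 2) (1 + ‖η‖ ^ 2) with h | h
          · rw [h.1]; linarith
          · rw [h.1]; linarith
  have h2 : (wZ d s η)⁻¹ = (1 + (‖η‖ ^ 2)⁻¹) * B⁻¹ := by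
    unfold wZ
    rw [mul_inv, inv_div, ← hB]
    congr 1
    field_simp
    ring
  have h3 : kerK d s ξ η ≤ 4 ^ s * ((1 + (‖η‖ ^ 2)⁻¹) * (A⁻¹ + B⁻¹)) := by
    unfold kerK
    rw [h2, show wH d s (ξ - η) = A from rfl]
    have : 4 ^ s * ((1 + (‖η‖ ^ 2)⁻¹) * (A⁻¹ + B⁻¹))
        = (4 ^ s * (A + B)) * A⁻¹ * ((1 + (‖η‖ ^ 2)⁻¹) * B⁻¹) := by
      field_simp
      ring
    rw [this]
    gcongr
  refine h3.trans ?_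
  gcongr
  have hAi : A⁻¹ ≤ 1 := inv_le_one_of_one_le₀ hA0
  have hBi : B⁻¹ ≤ 1 := inv_le_one_of_one_le₀ hB0
  have hAp : 0 < A⁻¹ := by positivity
  have hBp : 0 < B⁻¹ := by positivity
  have hN : 0 < (‖η‖ ^ 2)⁻¹ := by positivity
  by_cases hb : ‖η‖ < 1
  · rw [Set.indicator_of_mem (by simpa using hb)]
    nlinarith [mul_le_mul_of_nonneg_left hAi hN.le, mul_le_mul_of_nonneg_left hBi hN.le]
  · rw [Set.indicator_of_notMem (by simpa using hb)]
    push Not at hb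
    have hN1 : (‖η‖ ^ 2)⁻¹ ≤ 1 := inv_le_one_of_one_le₀ (one_le_pow₀ hb)
    nlinarith [mul_le_mul_of_nonneg_right hN1 hAp.le, mul_le_mul_of_nonneg_right hN1 hBp.le]

lemma kerK_nonneg (d s : ℕ) (ξ η : Euc d) : 0 ≤ kerK d s ξ η :=
  mul_nonneg (mul_nonneg ((adm_H d s).nonneg _) (inv_nonneg.2 ((adm_H d s).nonneg _)))
    (inv_nonneg.2 ((adm_Z d s).nonneg _))

lemma kerK_int (d s : ℕ) (hd : 3 ≤ d) (hs : (d : ℝ) / 2 < s) : ∃ M : ℝ, 0 ≤ M ∧ ∀ ξ : Euc d,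
    ∫⁻ η, ENNReal.ofReal (kerK d s ξ η) ≤ ENNReal.ofReal M := by
  have i1 := (integrable_W_inv d s hs)
  have i3 : Integrable ((Metric.ball (0 : Euc d) 1).indicator (fun η : Euc d => (‖η‖ ^ 2)⁻¹)) :=
    (integrable_indicator_iff measurableSet_ball).2 (integrableOn_inv_sq d hd)
  set J := ∫ ξ : Euc d, ((1 + ‖ξ‖ ^ 2) ^ s)⁻¹ with hJ
  set L := ∫ ξ : Euc d, (Metric.ball (0 : Euc d) 1).indicator (fun η : Euc d => (‖η‖ ^ 2)⁻¹) ξ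
    with hL
  have hJ0 : 0 ≤ J := integral_nonneg fun ξ => by positivity
  have hL0 : 0 ≤ L := integral_nonneg fun ξ => Set.indicator_nonneg (fun _ _ => by positivity) _
  refine ⟨4 ^ s * (2 * J + 2 * J + 2 * L), by positivity, fun ξ => ?_⟩
  have i2 : Integrable (fun η : Euc d => ((1 + ‖ξ - η‖ ^ 2) ^ s)⁻¹) := i1.comp_sub_left ξ
  have e2 : ∫ η : Euc d, ((1 + ‖ξ - η‖ ^ 2) ^ s)⁻¹ = J :=
    integral_sub_left_eq_self (fun η : Euc d => ((1 + ‖η‖ ^ 2) ^ s)⁻¹) volume ξ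
  have i12 : Integrable (fun η : Euc d => 2 * ((1 + ‖η‖ ^ 2) ^ s)⁻¹
      + 2 * ((1 + ‖ξ - η‖ ^ 2) ^ s)⁻¹) := (i1.const_mul 2).add (i2.const_mul 2)
  have i123 : Integrable (fun η : Euc d => 4 ^ s * (2 * ((1 + ‖η‖ ^ 2) ^ s)⁻¹
    + 2 * ((1 + ‖ξ - η‖ ^ 2) ^ s)⁻¹
    + 2 * (Metric.ball (0 : Euc d) 1).indicator (fun η : Euc d => (‖η‖ ^ 2)⁻¹) η)) := (i12.add (i3.const_mul 2)).const_mul ((4:ℝ) ^ s)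
  have e : ∫ η : Euc d, 4 ^ s * (2 * ((1 + ‖η‖ ^ 2) ^ s)⁻¹
    + 2 * ((1 + ‖ξ - η‖ ^ 2) ^ s)⁻¹
    + 2 * (Metric.ball (0 : Euc d) 1).indicator (fun η : Euc d => (‖η‖ ^ 2)⁻¹) η)
      = 4 ^ s * (2 * J + 2 * J + 2 * L) := by
    rw [integral_const_mul]
    congr 1
    rw [integral_add i12 (i3.const_mul 2), integral_add (i1.const_mul 2) (i2.const_mul 2),
      integral_const_mul, integral_const_mul, integral_const_mul, e2]
  rw [← e, ofReal_integral_eq_lintegral_ofReal i123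
    (Filter.Eventually.of_forall fun η => (kerK_nonneg d s ξ η).trans (kerK_le d s ξ η))]
  exact lintegral_mono fun η => ENNReal.ofReal_le_ofReal (kerK_le d s ξ η)

lemma fourier_sm {d : ℕ} (a b : 𝓢(Euc d, ℂ)) (ξ : Euc d) :
    𝓕 (sm a b) ξ = ∫ η, 𝓕 b η * 𝓕 a (ξ - η) := by
  have h := SchwartzMap.convolution_apply (ContinuousLinearMap.mul ℂ ℂ) (𝓕⁻ b) (𝓕⁻ a) (-ξ)
  have h1 : SchwartzMap.convolution (ContinuousLinearMap.mul ℂ ℂ) (𝓕⁻ b) (𝓕⁻ a)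
      = 𝓕⁻ (sm a b) := by
    have : 𝓕 (SchwartzMap.convolution (ContinuousLinearMap.mul ℂ ℂ) (𝓕⁻ b) (𝓕⁻ a)) = sm a b := by
      rw [SchwartzMap.fourier_convolution]
      ext x
      simp [sm_apply, mul_comm]
    rw [← this]; simp
  rw [h1] at h
  have hneg : ∀ (u : 𝓢(Euc d, ℂ)) (x : Euc d), 𝓕⁻ u x = 𝓕 u (-x) := by
    intro u x
    rw [SchwartzMap.fourierInv_coe, Real.fourierInv_eq_fourier_neg, SchwartzMap.fourier_coe]
  rw [hneg, neg_neg] at h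
  rw [h, MeasureTheory.convolution]
  rw [← integral_neg_eq_self]
  refine integral_congr_ae (Filter.Eventually.of_forall fun η => ?_)
  simp [hneg, sub_eq_add_neg, add_comm]

lemma cs_lintegral {α : Type*} [MeasurableSpace α] (μ : Measure α) (r p q : α → ℝ)
    (hp : AEMeasurable p μ) (hq : AEMeasurable q μ) (hp0 : ∀ x, 0 ≤ p x) (hq0 : ∀ x, 0 ≤ q x)
    (h : ∀ᵐ x ∂μ, r x ≤ √(p x) * √(q x)) :
    (∫⁻ x, ENNReal.ofReal (r x) ∂μ) ^ 2
      ≤ (∫⁻ x, ENNReal.ofReal (p x) ∂μ) * (∫⁻ x, ENNReal.ofReal (q x) ∂μ) := by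
  have h1 : ∫⁻ x, ENNReal.ofReal (r x) ∂μ
      ≤ ∫⁻ x, ((fun x => ENNReal.ofReal √(p x)) * (fun x => ENNReal.ofReal √(q x))) x ∂μ := by
    refine lintegral_mono_ae ?_
    filter_upwards [h] with x hx
    simp only [Pi.mul_apply]
    rw [← ENNReal.ofReal_mul (Real.sqrt_nonneg _)]
    exact ENNReal.ofReal_le_ofReal hx
  have h2 := ENNReal.lintegral_mul_le_Lp_mul_Lq μ Real.HolderConjugate.two_two
    (f := fun x => ENNReal.ofReal √(p x)) (g := fun x => ENNReal.ofReal √(q x))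
    (by fun_prop) (by fun_prop)
  have hsq : ∀ y : ℝ, 0 ≤ y → ENNReal.ofReal √y ^ (2:ℝ) = ENNReal.ofReal y := by
    intro y hy
    rw [ENNReal.rpow_ofNat, ← ENNReal.ofReal_pow (Real.sqrt_nonneg _), Real.sq_sqrt hy]
  simp only [hsq _ (hp0 _), hsq _ (hq0 _)] at h2
  have hs2 : ∀ y : ENNReal, (y ^ (1 / 2 : ℝ)) ^ 2 = y := by
    intro y
    rw [← ENNReal.rpow_natCast, ← ENNReal.rpow_mul]; norm_num
  calc _ ≤ ((∫⁻ x, ENNReal.ofReal (p x) ∂μ) ^ (1 / 2 : ℝ)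
        * (∫⁻ x, ENNReal.ofReal (q x) ∂μ) ^ (1 / 2 : ℝ)) ^ 2 := by
        gcongr; exact h1.trans h2
    _ = _ := by rw [mul_pow, hs2, hs2]

lemma Nw_ofReal {d : ℕ} {m : Euc d → ℝ} (hm : Adm m) (u : 𝓢(Euc d, ℂ)) :
    ENNReal.ofReal (Nw m u) = ∫⁻ ξ, ENNReal.ofReal (m ξ * ‖𝓕 u ξ‖ ^ 2) := by
  unfold Nw
  exact ofReal_integral_eq_lintegral_ofReal (schwartz_integ_sq hm _)
    (Filter.Eventually.of_forall fun ξ => mul_nonneg (hm.nonneg ξ) (by positivity))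

lemma prod_est (d s : ℕ) (hd : 3 ≤ d) (hs : (d : ℝ) / 2 < s) : ∃ M : ℝ, 0 ≤ M ∧
    ∀ a b : 𝓢(Euc d, ℂ), Nw (wH d s) (sm a b) ≤ M * (Nw (wH d s) a * Nw (wZ d s) b) := by
  obtain ⟨M, hM0, hM⟩ := kerK_int d s hd hs
  refine ⟨M, hM0, fun a b => ?_⟩
  have hZ := adm_Z d s
  have hH := adm_H d s
  have : Nontrivial (Euc d) := by
    have : Nonempty (Fin d) := ⟨⟨0, by omega⟩⟩
    infer_instance
  have hbd : 0 ≤ M * (Nw (wH d s) a * Nw (wZ d s) b) :=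
    mul_nonneg hM0 (mul_nonneg (Nw_nonneg hH _) (Nw_nonneg hZ _))
  rw [← ENNReal.ofReal_le_ofReal_iff hbd, ENNReal.ofReal_mul hM0,
    ENNReal.ofReal_mul (Nw_nonneg hH _), Nw_ofReal hH]
  set q : Euc d → Euc d → ℝ := fun ξ η =>
    (wH d s (ξ - η) * ‖𝓕 a (ξ - η)‖ ^ 2) * (wZ d s η * ‖𝓕 b η‖ ^ 2) with hq
  have q0 : ∀ ξ η, 0 ≤ q ξ η := fun ξ η =>
    mul_nonneg (mul_nonneg (hH.nonneg _) (by positivity)) (mul_nonneg (hZ.nonneg _) (by positivity))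
  have cH := hH.cont
  have cZ := hZ.cont
  have ca := (𝓕 a).continuous
  have cb := (𝓕 b).continuous
  have qc : Continuous (Function.uncurry q) := by
    simp only [hq, Function.uncurry_def]
    fun_prop
  have step1 : ∀ ξ, ENNReal.ofReal (wH d s ξ * ‖𝓕 (sm a b) ξ‖ ^ 2)
      ≤ ENNReal.ofReal M * ∫⁻ η, ENNReal.ofReal (q ξ η) := by
    intro ξ
    have hcs := cs_lintegral volume (fun η => √(wH d s ξ) * (‖𝓕 b η‖ * ‖𝓕 a (ξ - η)‖))
      (fun η => kerK d s ξ η) (q ξ) (by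
        unfold kerK
        have m1 : Measurable (fun η => wH d s (ξ - η)) := (cH.comp (by fun_prop)).measurable
        exact ((m1.inv.const_mul _).mul cZ.measurable.inv).aemeasurable)
      (Continuous.aemeasurable (by simp only [hq]; fun_prop)) (kerK_nonneg d s ξ) (q0 ξ) (by
        have : ∀ᵐ η : Euc d, η ≠ 0 := by
          simp [ae_iff]
        filter_upwards [this] with η hη
        have hη' : 0 < ‖η‖ := norm_pos_iff.2 hη
        have p1 : 0 < wH d s (ξ - η) := by unfold wH; positivity
        have p2 : 0 < wZ d s η := by unfold wZ; positivity
        rw [← Real.sqrt_mul (kerK_nonneg d s ξ η)]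
        have : kerK d s ξ η * q ξ η = wH d s ξ * (‖𝓕 b η‖ * ‖𝓕 a (ξ - η)‖) ^ 2 := by
          simp only [kerK, hq]
          field_simp
        rw [this, Real.sqrt_mul (hH.nonneg _), Real.sqrt_sq (by positivity)])
    have h1 : ENNReal.ofReal (wH d s ξ * ‖𝓕 (sm a b) ξ‖ ^ 2)
        = (ENNReal.ofReal (√(wH d s ξ) * ‖𝓕 (sm a b) ξ‖)) ^ 2 := by
      rw [← ENNReal.ofReal_pow (by positivity), mul_pow, Real.sq_sqrt (hH.nonneg _)]
    have h2 : ENNReal.ofReal (√(wH d s ξ) * ‖𝓕 (sm a b) ξ‖)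
        ≤ ∫⁻ η, ENNReal.ofReal (√(wH d s ξ) * (‖𝓕 b η‖ * ‖𝓕 a (ξ - η)‖)) := by
      have e : ∀ η, ENNReal.ofReal (√(wH d s ξ) * (‖𝓕 b η‖ * ‖𝓕 a (ξ - η)‖))
          = ENNReal.ofReal √(wH d s ξ) * ‖𝓕 b η * 𝓕 a (ξ - η)‖ₑ := by
        intro η
        rw [ENNReal.ofReal_mul (Real.sqrt_nonneg _), ← norm_mul, ofReal_norm]
      simp only [e]
      rw [lintegral_const_mul' _ _ ENNReal.ofReal_ne_top, ENNReal.ofReal_mul (Real.sqrt_nonneg _),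
        ofReal_norm, fourier_sm]
      gcongr
      exact enorm_integral_le_lintegral_enorm _
    rw [h1]
    calc _ ≤ _ := pow_le_pow_left' h2 2
      _ ≤ _ := hcs
      _ ≤ _ := by gcongr; exact hM ξ
  calc _ ≤ ∫⁻ ξ, ENNReal.ofReal M * ∫⁻ η, ENNReal.ofReal (q ξ η) := lintegral_mono step1
    _ = ENNReal.ofReal M * ∫⁻ ξ, ∫⁻ η, ENNReal.ofReal (q ξ η) :=
        lintegral_const_mul' _ _ ENNReal.ofReal_ne_top
    _ = ENNReal.ofReal M * ∫⁻ η, ∫⁻ ξ, ENNReal.ofReal (q ξ η) := by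
        rw [lintegral_lintegral_swap]
        exact (qc.measurable.ennreal_ofReal).aemeasurable
    _ = ENNReal.ofReal M * (ENNReal.ofReal (Nw (wH d s) a) * ENNReal.ofReal (Nw (wZ d s) b)) := by
        congr 1
        have : ∀ η, ∫⁻ ξ, ENNReal.ofReal (q ξ η)
            = ENNReal.ofReal (Nw (wH d s) a) * ENNReal.ofReal (wZ d s η * ‖𝓕 b η‖ ^ 2) := by
          intro η
          simp only [hq]
          have e : ∀ ξ, ENNReal.ofReal ((wH d s (ξ - η) * ‖𝓕 a (ξ - η)‖ ^ 2)
              * (wZ d s η * ‖𝓕 b η‖ ^ 2)) = ENNReal.ofReal (wH d s (ξ - η) * ‖𝓕 a (ξ - η)‖ ^ 2)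
              * ENNReal.ofReal (wZ d s η * ‖𝓕 b η‖ ^ 2) := fun ξ =>
            ENNReal.ofReal_mul (mul_nonneg (hH.nonneg _) (by positivity))
          simp only [e]
          rw [lintegral_mul_const' _ _ ENNReal.ofReal_ne_top, Nw_ofReal hH]
          congr 1
          exact lintegral_sub_right_eq_self
            (fun ξ => ENNReal.ofReal (wH d s ξ * ‖𝓕 a ξ‖ ^ 2)) η
        simp only [this]
        rw [lintegral_const_mul' _ _ ENNReal.ofReal_ne_top, Nw_ofReal hZ]


/-! ### Part 3: the exponential -/

/-- complexification of a real Schwartz function -/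
def cx {d : ℕ} (φ : 𝓢(Euc d, ℝ)) : 𝓢(Euc d, ℂ) := φ.postcompCLM Complex.ofRealCLM

lemma cx_apply {d : ℕ} (φ : 𝓢(Euc d, ℝ)) (x : Euc d) : cx φ x = (φ x : ℂ) := rfl

lemma exp_temperate {d : ℕ} (φ : 𝓢(Euc d, ℝ)) :
    (fun x => Real.exp (φ x)).HasTemperateGrowth := by
  set M := SchwartzMap.seminorm ℝ 0 0 φ with hM
  have hM0 : 0 ≤ M := apply_nonneg _ _
  let b : ContDiffBump (0 : ℝ) := ⟨M + 1, M + 2, by linarith, by linarith⟩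
  have h1 : HasCompactSupport (fun t : ℝ => b t * Real.exp t) :=
    b.hasCompactSupport.mul_right
  have h2 : (fun t : ℝ => b t * Real.exp t).HasTemperateGrowth :=
    h1.hasTemperateGrowth (b.contDiff.mul Real.contDiff_exp)
  have h3 := h2.comp φ.hasTemperateGrowth
  convert h3 using 1
  funext x
  have h4 : b (φ x) = 1 := by
    apply b.one_of_mem_closedBall
    have := SchwartzMap.norm_le_seminorm ℝ φ x
    simp only [mem_closedBall_zero_iff]
    show ‖φ x‖ ≤ M + 1
    linarith
  simp [h4]

lemma abs_exp_sub_one_le' (t B : ℝ) (h : |t| ≤ B) : |Real.exp t - 1| ≤ Real.exp B * |t| := by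
  have hB : 1 ≤ Real.exp B := Real.one_le_exp (le_trans (abs_nonneg t) h)
  have h1 := Real.add_one_le_exp t
  have h2 := Real.add_one_le_exp (-t)
  have h3 : Real.exp t * Real.exp (-t) = 1 := by rw [← Real.exp_add]; simp
  have h4 : Real.exp t ≤ Real.exp B := Real.exp_le_exp.2 ((le_abs_self t).trans h)
  have h5 := Real.exp_pos t
  rcases le_total 0 t with ht | ht
  · rw [abs_of_nonneg (by linarith), abs_of_nonneg ht]
    nlinarith
  · rw [abs_of_nonpos (by linarith [Real.exp_le_one_iff.2 ht]), abs_of_nonpos ht]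
    nlinarith

lemma exists_expm1 {d : ℕ} (φ : 𝓢(Euc d, ℝ)) :
    ∃ E : 𝓢(Euc d, ℂ), ∀ x, E x = Complex.exp (φ x) - 1 := by
  have hT := exp_temperate φ
  let D : 𝓢(Euc d, Euc d →L[ℝ] ℝ) :=
    SchwartzMap.smulLeftCLM _ (fun x => Real.exp (φ x)) (SchwartzMap.fderivCLM ℝ _ _ φ)
  have hD : fderiv ℝ (fun x => Real.exp (φ x) - 1) = D := by
    funext x
    have h1 : HasFDerivAt (fun x => Real.exp (φ x) - 1) (Real.exp (φ x) • fderiv ℝ φ x) x :=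
      ((φ.hasFDerivAt x).exp).sub_const 1
    rw [h1.fderiv]
    show _ = SchwartzMap.smulLeftCLM _ (fun x => Real.exp (φ x)) (SchwartzMap.fderivCLM ℝ _ _ φ) x
    rw [SchwartzMap.smulLeftCLM_apply_apply hT]
    rfl
  let ER : 𝓢(Euc d, ℝ) :=
    { toFun := fun x => Real.exp (φ x) - 1
      smooth' := ((Real.contDiff_exp.comp (φ.smooth _)).sub contDiff_const)
      decay' := by
        intro k n
        cases n with
        | zero =>
          obtain ⟨C, hC, h⟩ := φ.decay k 0
          refine ⟨Real.exp (SchwartzMap.seminorm ℝ 0 0 φ) * C, fun x => ?_⟩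
          have h1 := h x
          rw [norm_iteratedFDeriv_zero] at h1 ⊢
          have h2 := abs_exp_sub_one_le' (φ x) _ (SchwartzMap.norm_le_seminorm ℝ φ x)
          rw [Real.norm_eq_abs] at h1 ⊢
          calc ‖x‖ ^ k * |Real.exp (φ x) - 1| ≤ ‖x‖ ^ k * (Real.exp (SchwartzMap.seminorm ℝ 0 0 φ) * |φ x|) := by gcongr
            _ = Real.exp (SchwartzMap.seminorm ℝ 0 0 φ) * (‖x‖ ^ k * |φ x|) := by ring
            _ ≤ _ := by gcongr
        | succ n =>
          obtain ⟨C, hC, h⟩ := D.decay k n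
          refine ⟨C, fun x => ?_⟩
          rw [← norm_iteratedFDeriv_fderiv, hD]
          exact h x }
  refine ⟨cx ER, fun x => ?_⟩
  rw [cx_apply]
  show (((Real.exp (φ x) - 1 : ℝ)) : ℂ) = _
  push_cast
  rfl

lemma E_norm_le {d : ℕ} {φ : 𝓢(Euc d, ℝ)} {E : 𝓢(Euc d, ℂ)} {B : ℝ}
    (hE : ∀ x, E x = Complex.exp (φ x) - 1) (hB : ∀ x, |φ x| ≤ B) (x : Euc d) :
    ‖E x‖ ≤ Real.exp B * ‖cx φ x‖ := by
  rw [hE, cx_apply, ← Complex.ofReal_exp, ← Complex.ofReal_one, ← Complex.ofReal_sub,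
    Complex.norm_real, Complex.norm_real]
  exact abs_exp_sub_one_le' _ _ (hB x)

lemma NwL_le {d : ℕ} (u v : 𝓢(Euc d, ℂ)) (c : ℝ) (h : ∀ x, ‖u x‖ ≤ c * ‖v x‖) :
    Nw (wL d) u ≤ c ^ 2 * Nw (wL d) v := by
  rw [NwL_eq, NwL_eq, ← integral_const_mul]
  have hi : ∀ w : 𝓢(Euc d, ℂ), Integrable (fun x => ‖w x‖ ^ 2) := fun w => by
    simpa [wL] using schwartz_integ_sq (adm_L d) w
  refine integral_mono (hi u) ((hi v).const_mul _) fun x => ?_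
  have := h x
  calc ‖u x‖ ^ 2 ≤ (c * ‖v x‖) ^ 2 := by gcongr
    _ = _ := by ring

lemma sd_E {d : ℕ} {φ : 𝓢(Euc d, ℝ)} {E : 𝓢(Euc d, ℂ)}
    (hE : ∀ x, E x = Complex.exp (φ x) - 1) (i : Fin d) :
    sd i E = sd i (cx φ) + sm (sd i (cx φ)) E := by
  ext x
  have h0 : (⇑E : Euc d → ℂ) = fun x => Complex.exp (cx φ x) - 1 := by
    funext x; rw [hE, cx_apply]
  have h1 : HasFDerivAt (⇑E : Euc d → ℂ) (Complex.exp (cx φ x) • fderiv ℝ (cx φ) x) x := by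
    rw [h0]
    exact (((cx φ).hasFDerivAt x).cexp).sub_const 1
  rw [add_apply, sm_apply, sd_coe, sd_coe]
  unfold pd
  rw [h1.fderiv, h0]
  simp
  ring

lemma E_bound (d s : ℕ) (hd : 3 ≤ d) (hs : (d : ℝ) / 2 < s) (X : ℝ) : ∃ c B : ℝ, 0 ≤ c ∧ 0 ≤ B ∧
    ∀ (φ : 𝓢(Euc d, ℝ)) (E : 𝓢(Euc d, ℂ)), Nw (wH d (s + 1)) (cx φ) ≤ X →
      (∀ x, E x = Complex.exp (φ x) - 1) →
      Nw (wH d s) E ≤ c ∧ (∀ x, |φ x| ≤ B) := by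
  obtain ⟨J, hJ0, hJ⟩ := sup_bound d s hs
  obtain ⟨M, hM0, hM⟩ := prod_est d s hd hs
  have hpi : (0:ℝ) < 4 * π ^ 2 := by positivity
  set X' := max X 0 with hX'
  have hX0 : 0 ≤ X' := le_max_right _ _
  set δ : ℝ := 1 / (4 * (M * X' + 1)) with hδ
  have hMX : 0 ≤ M * X' := by positivity
  have hδ0 : 0 < δ := by positivity
  refine ⟨2 * (δ * (2 * X') + (1 + 1 / δ) ^ s * (Real.exp (J + X') ^ 2 * X')), J + X', by positivity,
    by positivity, fun φ E hφ hE => ?_⟩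
  have hφH : Nw (wH d s) (cx φ) ≤ X' := by
    refine le_trans (Nw_mono (adm_H d s) (adm_H d (s+1)) (fun ξ => ?_) _) (hφ.trans (le_max_left _ _))
    unfold wH
    exact pow_le_pow_right₀ (by nlinarith [sq_nonneg ‖ξ‖]) (by omega)
  have hφG : Nw (wG d s) (cx φ) ≤ X' :=
    le_trans (Nw_mono (adm_G d s) (adm_H d (s+1)) (wG_le d s) _) (hφ.trans (le_max_left _ _))
  have hφL : Nw (wL d) (cx φ) ≤ X' := by
    refine le_trans (Nw_mono (adm_L d) (adm_H d s) (fun ξ => ?_) _) hφH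
    unfold wH wL
    exact one_le_pow₀ (by nlinarith [sq_nonneg ‖ξ‖])
  have hB : ∀ x, |φ x| ≤ J + X' := fun x => by
    have := hJ (cx φ) x
    rw [cx_apply, Complex.norm_real, Real.norm_eq_abs] at this
    linarith
  refine ⟨?_, hB⟩
  have hL : Nw (wL d) E ≤ Real.exp (J + X') ^ 2 * X' :=
    (NwL_le E (cx φ) _ (E_norm_le hE hB)).trans (by gcongr)
  have hEH := Nw_nonneg (adm_H d s) E
  have hG : 4 * π ^ 2 * Nw (wG d s) E ≤ 4 * π ^ 2 * (2 * X' + 2 * M * X' * Nw (wH d s) E) := by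
    rw [← sum_sd]
    have h1 : ∀ i : Fin d, Nw (wH d s) (sd i E) ≤
        (2 + 2 * M * Nw (wH d s) E) * Nw (wH d s) (sd i (cx φ)) := fun i => by
      rw [sd_E hE i]
      have h2 := Nw_add (adm_H d s) (sd i (cx φ)) (sm (sd i (cx φ)) E)
      have h3 := hM (sd i (cx φ)) E
      have h4 := Nw_mono (adm_Z d s) (adm_H d s) (wZ_le d s) E
      have h5 := Nw_nonneg (adm_H d s) (sd i (cx φ))
      have h6 : M * (Nw (wH d s) (sd i (cx φ)) * Nw (wZ d s) E)
        ≤ M * (Nw (wH d s) (sd i (cx φ)) * Nw (wH d s) E) := by gcongr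
      linarith
    refine (Finset.sum_le_sum fun i _ => h1 i).trans ?_
    rw [← Finset.mul_sum, sum_sd]
    have : 0 ≤ M * Nw (wH d s) E := by positivity
    calc (2 + 2 * M * Nw (wH d s) E) * (4 * π ^ 2 * Nw (wG d s) (cx φ)) 
        ≤ (2 + 2 * M * Nw (wH d s) E) * (4 * π ^ 2 * X') := by
          gcongr
      _ = _ := by ring
  have hG' := le_of_mul_le_mul_left hG hpi
  have hi := interp d s δ hδ0 E
  have hδM : δ * (2 * M * X') ≤ 1 / 2 := by
    rw [hδ, div_mul_eq_mul_div, div_le_div_iff₀ (by positivity) (by norm_num)]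
    linarith
  have k1 : δ * Nw (wG d s) E ≤ δ * (2 * X') + 1 / 2 * Nw (wH d s) E := by
    calc δ * Nw (wG d s) E ≤ δ * (2 * X' + 2 * M * X' * Nw (wH d s) E) := by gcongr
      _ = δ * (2 * X') + δ * (2 * M * X') * Nw (wH d s) E := by ring
      _ ≤ _ := by gcongr
  have k2 : (1 + 1 / δ) ^ s * Nw (wL d) E ≤ (1 + 1 / δ) ^ s * (Real.exp (J + X') ^ 2 * X') := by
    gcongr
  linarith

/-! ### Part 4: Hodge-type decomposition -/

lemma lagr_real {d : ℕ} (a x : Fin d → ℝ) :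
    (∑ i, a i ^ 2) * ∑ j, x j ^ 2 = (∑ i, a i * x i) ^ 2
      + 1 / 2 * ∑ i, ∑ j, (a i * x j - a j * x i) ^ 2 := by
  have h : ∀ i j, (a i * x j - a j * x i) ^ 2
      = a i ^ 2 * x j ^ 2 + x i ^ 2 * a j ^ 2 - 2 * ((a i * x i) * (a j * x j)) := by
    intro i j; ring
  simp only [h, Finset.sum_add_distrib, Finset.sum_sub_distrib, ← Finset.mul_sum, ← Finset.sum_mul]
  ring

lemma lagr_cx {d : ℕ} (a : Fin d → ℝ) (z : Fin d → ℂ) :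
    (∑ i, a i ^ 2) * ∑ j, ‖z j‖ ^ 2 = ‖∑ i, (a i : ℂ) * z i‖ ^ 2
      + 1 / 2 * ∑ i, ∑ j, ‖(a i : ℂ) * z j - (a j : ℂ) * z i‖ ^ 2 := by
  have h1 := lagr_real a (fun i => (z i).re)
  have h2 := lagr_real a (fun i => (z i).im)
  have e : ∀ z : ℂ, ‖z‖ ^ 2 = z.re ^ 2 + z.im ^ 2 := fun z => by
    rw [Complex.sq_norm, Complex.normSq_apply]; ring
  simp only [e, Complex.re_sum, Complex.im_sum, Complex.sub_re, Complex.sub_im,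
    Complex.re_ofReal_mul, Complex.im_ofReal_mul, Finset.sum_add_distrib]
  linarith

lemma fourier_sum {d : ℕ} {ι : Type*} (t : Finset ι) (f : ι → 𝓢(Euc d, ℂ)) (ξ : Euc d) :
    𝓕 (∑ i ∈ t, f i) ξ = ∑ i ∈ t, 𝓕 (f i) ξ := by
  classical
  induction t using Finset.induction_on with
  | empty => simp
  | insert i t hi ih =>
    rw [Finset.sum_insert hi, Finset.sum_insert hi, FourierTransform.fourier_add, add_apply, ih]

lemma fourier_sub' {d : ℕ} (f g : 𝓢(Euc d, ℂ)) (ξ : Euc d) :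
    𝓕 (f - g) ξ = 𝓕 f ξ - 𝓕 g ξ := by
  rw [sub_eq_add_neg, FourierTransform.fourier_add, add_apply]
  simp [sub_eq_add_neg]

/-- divergence -/
def dv {d : ℕ} (v : Fin d → 𝓢(Euc d, ℂ)) : 𝓢(Euc d, ℂ) := ∑ i, sd i (v i)
/-- curl entries -/
def cu {d : ℕ} (v : Fin d → 𝓢(Euc d, ℂ)) (i j : Fin d) : 𝓢(Euc d, ℂ) := sd i (v j) - sd j (v i)

lemma fourier_dv {d : ℕ} (v : Fin d → 𝓢(Euc d, ℂ)) (ξ : Euc d) :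
    𝓕 (dv v) ξ = (2 * π * Complex.I) * ∑ i, (ξ i : ℂ) * 𝓕 (v i) ξ := by
  rw [dv, fourier_sum, Finset.mul_sum]
  exact Finset.sum_congr rfl fun i _ => fourier_sd i _ ξ

lemma fourier_cu {d : ℕ} (v : Fin d → 𝓢(Euc d, ℂ)) (i j : Fin d) (ξ : Euc d) :
    𝓕 (cu v i j) ξ = (2 * π * Complex.I) * ((ξ i : ℂ) * 𝓕 (v j) ξ - (ξ j : ℂ) * 𝓕 (v i) ξ) := by
  rw [cu, fourier_sub', fourier_sd, fourier_sd]; ring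

lemma norm_2piI_sq (z : ℂ) : ‖(2 * π * Complex.I) * z‖ ^ 2 = 4 * π ^ 2 * ‖z‖ ^ 2 := by
  rw [norm_mul, mul_pow]
  congr 1
  simp [abs_of_pos Real.pi_pos]
  ring

lemma lagr_int (d s : ℕ) (v : Fin d → 𝓢(Euc d, ℂ)) :
    4 * π ^ 2 * ∑ j, Nw (wG d s) (v j) = Nw (wH d s) (dv v)
      + 1 / 2 * ∑ i, ∑ j, Nw (wH d s) (cu v i j) := by
  unfold Nw
  have hi : ∀ u : 𝓢(Euc d, ℂ), Integrable (fun ξ => wH d s ξ * ‖𝓕 u ξ‖ ^ 2) := fun u =>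
    schwartz_integ_sq (adm_H d s) (𝓕 u)
  have hg : ∀ u : 𝓢(Euc d, ℂ), Integrable (fun ξ => wG d s ξ * ‖𝓕 u ξ‖ ^ 2) := fun u =>
    schwartz_integ_sq (adm_G d s) (𝓕 u)
  rw [← integral_finsetSum _ (fun j _ => hg (v j)), ← integral_const_mul]
  have e1 : ∑ i, ∑ j, ∫ ξ, wH d s ξ * ‖𝓕 (cu v i j) ξ‖ ^ 2
      = ∫ ξ, ∑ i, ∑ j, wH d s ξ * ‖𝓕 (cu v i j) ξ‖ ^ 2 := by
    rw [integral_finsetSum _ (fun i _ => integrable_finsetSum _ fun j _ => hi _)]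
    exact Finset.sum_congr rfl fun i _ => (integral_finsetSum _ (fun j _ => hi _)).symm
  rw [e1, ← integral_const_mul, ← integral_add (hi _) ((integrable_finsetSum _ fun i _ =>
    integrable_finsetSum _ fun j _ => hi _).const_mul _)]
  congr 1
  funext ξ
  have h := lagr_cx (fun i => ξ i) (fun j => 𝓕 (v j) ξ)
  simp only [fourier_dv, fourier_cu, norm_2piI_sq, ← Finset.mul_sum]
  have hn : ‖ξ‖ ^ 2 = ∑ i, ξ i ^ 2 := by
    rw [EuclideanSpace.norm_sq_eq]; simp
  have hw : wG d s ξ = (∑ i, ξ i ^ 2) * wH d s ξ := by unfold wG wH; rw [hn]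
  rw [hw]
  linear_combination (4 * π ^ 2 * wH d s ξ) * h

lemma temperate_q (d : ℕ) (ε : ℝ) (hε : 0 < ε) :
    (fun ξ : Euc d => (‖ξ‖ ^ 2 + ε)⁻¹).HasTemperateGrowth := by
  have h1 := Function.hasTemperateGrowth_one_add_norm_sq_rpow (Euc d) (-1 : ℝ)
  have h2 : (fun ξ : Euc d => (Real.sqrt ε)⁻¹ • ξ).HasTemperateGrowth := by fun_prop
  have h3 := (Function.HasTemperateGrowth.const (E := Euc d) (ε⁻¹)).mul (h1.comp h2)
  suffices h4 : (fun ξ : Euc d => (‖ξ‖ ^ 2 + ε)⁻¹) = (fun _ => ε⁻¹) *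
      ((fun x : Euc d => (1 + ‖x‖ ^ 2) ^ (-1 : ℝ)) ∘ fun ξ => (Real.sqrt ε)⁻¹ • ξ) by
    rw [h4]; exact h3
  funext ξ
  simp only [Pi.mul_apply, Function.comp, Real.rpow_neg_one]
  rw [← mul_inv, norm_smul, mul_pow, norm_inv, Real.norm_of_nonneg (Real.sqrt_nonneg _), inv_pow,
    Real.sq_sqrt hε.le]
  congr 1
  field_simp
  ring

lemma hodge_exists (d : ℕ) (ε : ℝ) (hε : 0 < ε) (v w : Fin d → 𝓢(Euc d, ℂ)) :
    ∃ u : Fin d → 𝓢(Euc d, ℂ), ∀ ξ j, 𝓕 (u j) ξ = 𝓕 (w j) ξ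
      + (((‖ξ‖ ^ 2 + ε)⁻¹ * ξ j : ℝ) : ℂ) * ∑ i, (ξ i : ℂ) * (𝓕 (v i) ξ - 𝓕 (w i) ξ) := by
  have hq := temperate_q d ε hε
  have hc : ∀ i : Fin d, (fun ξ : Euc d => ξ i).HasTemperateGrowth := fun i =>
    (EuclideanSpace.proj i : Euc d →L[ℝ] ℝ).hasTemperateGrowth
  have hg : ∀ j, (fun ξ : Euc d => (‖ξ‖ ^ 2 + ε)⁻¹ * ξ j).HasTemperateGrowth := fun j =>
    hq.mul (hc j)
  refine ⟨fun j => w j + ∑ i, 𝓕⁻ (SchwartzMap.smulLeftCLM ℂ (fun ξ : Euc d => (‖ξ‖ ^ 2 + ε)⁻¹ * ξ j)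
    (SchwartzMap.smulLeftCLM ℂ (fun ξ : Euc d => ξ i) (𝓕 (v i - w i)))), fun ξ j => ?_⟩
  rw [FourierTransform.fourier_add, add_apply, fourier_sum, Finset.mul_sum]
  congr 1
  refine Finset.sum_congr rfl fun i _ => ?_
  rw [FourierTransform.fourier_fourierInv_eq, SchwartzMap.smulLeftCLM_apply_apply (hg j),
    SchwartzMap.smulLeftCLM_apply_apply (hc i), fourier_sub', Complex.real_smul, Complex.real_smul]

lemma cauchy_cx {d : ℕ} (a : Fin d → ℝ) (z : Fin d → ℂ) :
    ‖∑ i, (a i : ℂ) * z i‖ ^ 2 ≤ (∑ i, a i ^ 2) * ∑ j, ‖z j‖ ^ 2 := by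
  rw [lagr_cx a z]
  have : 0 ≤ ∑ i, ∑ j, ‖(a i : ℂ) * z j - (a j : ℂ) * z i‖ ^ 2 :=
    Finset.sum_nonneg fun i _ => Finset.sum_nonneg fun j _ => by positivity
  linarith

lemma sq_norm_add_le (a b : ℂ) : ‖a + b‖ ^ 2 ≤ 2 * ‖a‖ ^ 2 + 2 * ‖b‖ ^ 2 := by
  have h := norm_add_le a b
  have := norm_nonneg (a + b)
  nlinarith [sq_nonneg (‖a‖ - ‖b‖)]

lemma hodge_G (d s : ℕ) (ε : ℝ) (hε : 0 < ε) (v w u : Fin d → 𝓢(Euc d, ℂ))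
    (hu : ∀ ξ j, 𝓕 (u j) ξ = 𝓕 (w j) ξ
      + (((‖ξ‖ ^ 2 + ε)⁻¹ * ξ j : ℝ) : ℂ) * ∑ i, (ξ i : ℂ) * (𝓕 (v i) ξ - 𝓕 (w i) ξ)) :
    ∑ j, Nw (wG d s) (u j) ≤ Nw (wH d s) (dv v) + ∑ i, ∑ j, Nw (wH d s) (cu w i j)
      + 2 * (ε * ∑ j, Nw (wH d s) (w j)) := by
  have hpi : (2:ℝ) ≤ 4 * π ^ 2 := by nlinarith [Real.pi_gt_three]
  have h1 := lagr_int d s u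
  have hc : ∀ i j, Nw (wH d s) (cu u i j) = Nw (wH d s) (cu w i j) := by
    intro i j
    unfold Nw
    congr 1
    funext ξ
    rw [fourier_cu, fourier_cu, hu, hu]
    congr 4
    push_cast
    ring
  have hd' : Nw (wH d s) (dv u) ≤ 2 * Nw (wH d s) (dv v)
      + 8 * π ^ 2 * (ε * ∑ j, Nw (wH d s) (w j)) := by
    unfold Nw
    have hi : ∀ u : 𝓢(Euc d, ℂ), Integrable (fun ξ => wH d s ξ * ‖𝓕 u ξ‖ ^ 2) := fun u =>
      schwartz_integ_sq (adm_H d s) (𝓕 u)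
    rw [← integral_finsetSum _ (fun j _ => hi (w j)), ← integral_const_mul, ← integral_const_mul,
      ← integral_const_mul, ← integral_add ((hi _).const_mul _)
      (((integrable_finsetSum _ fun j _ => hi _).const_mul _).const_mul _)]
    refine integral_mono (hi _) (((hi _).const_mul _).add
      (((integrable_finsetSum _ fun j _ => hi _).const_mul _).const_mul _)) fun ξ => ?_
    simp only [fourier_dv, norm_2piI_sq, ← Finset.mul_sum]
    set q := (‖ξ‖ ^ 2 + ε)⁻¹ with hq
    have hn : ‖ξ‖ ^ 2 = ∑ i, ξ i ^ 2 := by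
      rw [EuclideanSpace.norm_sq_eq]; simp
    have hq0 : 0 < q := by positivity
    have hq1 : q * (‖ξ‖ ^ 2 + ε) = 1 := inv_mul_cancel₀ (by positivity)
    set V := ∑ i, (ξ i : ℂ) * 𝓕 (v i) ξ with hV
    set W := ∑ i, (ξ i : ℂ) * 𝓕 (w i) ξ with hW
    have e : ∑ i, (ξ i : ℂ) * 𝓕 (u i) ξ = ((q * ‖ξ‖ ^ 2 : ℝ) : ℂ) * V + ((q * ε : ℝ) : ℂ) * W := by
      have e1 : ∀ i, (ξ i : ℂ) * 𝓕 (u i) ξ = (ξ i : ℂ) * 𝓕 (w i) ξ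
          + ((ξ i ^ 2 : ℝ) : ℂ) * ((q : ℂ) * (V - W)) := by
        intro i
        rw [hu]
        have : ∑ i, (ξ i : ℂ) * (𝓕 (v i) ξ - 𝓕 (w i) ξ) = V - W := by
          simp only [hV, hW, mul_sub, Finset.sum_sub_distrib]
        rw [this, ← hq]
        push_cast
        ring
      simp only [e1, Finset.sum_add_distrib, ← Finset.sum_mul, ← Complex.ofReal_sum, ← hn]
      have e2 : (q * ε : ℝ) = 1 - q * ‖ξ‖ ^ 2 := by linarith
      rw [← hW, e2]
      push_cast
      ring
    rw [e]
    have k1 := sq_norm_add_le (((q * ‖ξ‖ ^ 2 : ℝ) : ℂ) * V) (((q * ε : ℝ) : ℂ) * W)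
    have k2 : ‖((q * ‖ξ‖ ^ 2 : ℝ) : ℂ) * V‖ ^ 2 ≤ ‖V‖ ^ 2 := by
      rw [norm_mul, Complex.norm_real, Real.norm_of_nonneg (by positivity)]
      have : q * ‖ξ‖ ^ 2 ≤ 1 := by nlinarith
      gcongr
      exact mul_le_of_le_one_left (norm_nonneg _) this
    have k3 : ‖((q * ε : ℝ) : ℂ) * W‖ ^ 2 ≤ ε * ∑ j, ‖𝓕 (w j) ξ‖ ^ 2 := by
      have c := cauchy_cx (fun i => ξ i) (fun i => 𝓕 (w i) ξ)
      rw [← hn, ← hW] at c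
      rw [norm_mul, Complex.norm_real, Real.norm_of_nonneg (by positivity), mul_pow]
      have hS : 0 ≤ ∑ j, ‖𝓕 (w j) ξ‖ ^ 2 := Finset.sum_nonneg fun j _ => by positivity
      have l1 : q * ‖ξ‖ ^ 2 ≤ 1 := by nlinarith
      have l2 : q * ε ≤ 1 := by nlinarith [mul_nonneg hq0.le (sq_nonneg ‖ξ‖)]
      calc (q * ε) ^ 2 * ‖W‖ ^ 2 ≤ (q * ε) ^ 2 * (‖ξ‖ ^ 2 * ∑ j, ‖𝓕 (w j) ξ‖ ^ 2) := by gcongr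
        _ = (q * ε) * ((q * ‖ξ‖ ^ 2) * (ε * ∑ j, ‖𝓕 (w j) ξ‖ ^ 2)) := by ring
        _ ≤ 1 * (1 * (ε * ∑ j, ‖𝓕 (w j) ξ‖ ^ 2)) := by gcongr
        _ = _ := by ring
    have hw0 := (adm_H d s).nonneg ξ
    have hk : ‖((q * ‖ξ‖ ^ 2 : ℝ) : ℂ) * V + ((q * ε : ℝ) : ℂ) * W‖ ^ 2
        ≤ 2 * ‖V‖ ^ 2 + 2 * (ε * ∑ j, ‖𝓕 (w j) ξ‖ ^ 2) := by linarith
    calc wH d s ξ * (4 * π ^ 2 * ‖((q * ‖ξ‖ ^ 2 : ℝ) : ℂ) * V + ((q * ε : ℝ) : ℂ) * W‖ ^ 2)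
        ≤ wH d s ξ * (4 * π ^ 2 * (2 * ‖V‖ ^ 2 + 2 * (ε * ∑ j, ‖𝓕 (w j) ξ‖ ^ 2))) := by gcongr
      _ = _ := by ring
  simp only [hc] at h1
  have hA := Nw_nonneg (adm_H d s) (dv v)
  have hB : 0 ≤ ∑ i, ∑ j, Nw (wH d s) (cu w i j) :=
    Finset.sum_nonneg fun i _ => Finset.sum_nonneg fun j _ => Nw_nonneg (adm_H d s) _
  have hfin : 4 * π ^ 2 * ∑ j, Nw (wG d s) (u j) ≤ 4 * π ^ 2 *
    (Nw (wH d s) (dv v) + ∑ i, ∑ j, Nw (wH d s) (cu w i j)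
      + 2 * (ε * ∑ j, Nw (wH d s) (w j))) := by
    nlinarith
  exact le_of_mul_le_mul_left hfin (by positivity)

/-! ### Part 5: coercivity -/

lemma integrable_inner' {d : ℕ} (f g : 𝓢(Euc d, ℂ)) :
    Integrable (fun x => inner ℂ (f x) (g x)) := by
  have h := schwartz_integ (adm_L d) f g
  refine h.mono' (f.continuous.inner g.continuous).aestronglyMeasurable
    (Filter.Eventually.of_forall fun x => ?_)
  simpa [wL] using norm_inner_le_norm (𝕜 := ℂ) (f x) (g x)

lemma integrable_inner_re {d : ℕ} (f g : 𝓢(Euc d, ℂ)) :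
    Integrable (fun x => (inner ℂ (f x) (g x)).re) := (integrable_inner' f g).re

lemma plancherel_re {d : ℕ} (f g : 𝓢(Euc d, ℂ)) :
    ∫ x, (inner ℂ (f x) (g x)).re = ∫ ξ, (inner ℂ (𝓕 f ξ) (𝓕 g ξ)).re := by
  have h := SchwartzMap.integral_inner_fourier_fourier f g
  have h1 := integral_re (integrable_inner' f g)
  have h2 := integral_re (integrable_inner' (𝓕 f) (𝓕 g))
  simp only [RCLike.re_eq_complex_re] at h1 h2
  rw [h1, h2, h]

lemma hodge_orth (d : ℕ) (ε : ℝ) (hε : 0 < ε) (v w u : Fin d → 𝓢(Euc d, ℂ))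
    (hu : ∀ ξ j, 𝓕 (u j) ξ = 𝓕 (w j) ξ
      + (((‖ξ‖ ^ 2 + ε)⁻¹ * ξ j : ℝ) : ℂ) * ∑ i, (ξ i : ℂ) * (𝓕 (v i) ξ - 𝓕 (w i) ξ)) :
    ∑ j, ∫ x, (inner ℂ ((v j - u j) x) ((w j - u j) x)).re ≤ 0 := by
  rw [Finset.sum_congr rfl fun j _ => plancherel_re (v j - u j) (w j - u j)]
  rw [← integral_finsetSum _ (fun j _ => (integrable_inner_re _ _))]
  refine integral_nonpos fun ξ => ?_
  simp only [Pi.zero_apply]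
  set q := (‖ξ‖ ^ 2 + ε)⁻¹ with hq
  have hn : ‖ξ‖ ^ 2 = ∑ i, ξ i ^ 2 := by
    rw [EuclideanSpace.norm_sq_eq]; simp
  have hq0 : 0 < q := by positivity
  have hq1 : q * (‖ξ‖ ^ 2 + ε) = 1 := inv_mul_cancel₀ (by positivity)
  set Z := ∑ i, (ξ i : ℂ) * (𝓕 (v i) ξ - 𝓕 (w i) ξ) with hZ
  have e : ∀ j, (inner ℂ (𝓕 (v j - u j) ξ) (𝓕 (w j - u j) ξ)).re
      = -q * (Z.re * (ξ j * (𝓕 (v j) ξ - 𝓕 (w j) ξ)).re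
        + Z.im * (ξ j * (𝓕 (v j) ξ - 𝓕 (w j) ξ)).im) + q ^ 2 * ‖Z‖ ^ 2 * ξ j ^ 2 := by
    intro j
    have h1 := hu ξ j
    rw [← hq, ← hZ] at h1
    rw [fourier_sub', fourier_sub', h1, Complex.sq_norm, Complex.normSq_apply]
    simp only [RCLike.inner_apply, Complex.mul_re, Complex.mul_im, Complex.sub_re, Complex.sub_im,
      Complex.add_re, Complex.add_im, Complex.ofReal_re, Complex.ofReal_im, Complex.conj_re,
      Complex.conj_im]
    ring
  have e2 : ∑ j, (inner ℂ (𝓕 (v j - u j) ξ) (𝓕 (w j - u j) ξ)).re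
      = -q * (Z.re * Z.re + Z.im * Z.im) + q ^ 2 * ‖Z‖ ^ 2 * ‖ξ‖ ^ 2 := by
    simp only [e, Finset.sum_add_distrib, ← Finset.mul_sum, ← Complex.re_sum, ← Complex.im_sum, hn, ← hZ]
  have h3 : ∑ j, (inner ℂ (𝓕 (v j - u j) ξ) (𝓕 (w j - u j) ξ)).re ≤ 0 := by
    rw [e2, ← Complex.normSq_apply, ← Complex.sq_norm]
    have : q * ‖ξ‖ ^ 2 ≤ 1 := by nlinarith
    have h0 : 0 ≤ q * ‖Z‖ ^ 2 := by positivity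
    nlinarith
  exact h3

lemma coerc (d : ℕ) (ε : ℝ) (hε : 0 < ε) (v w u : Fin d → 𝓢(Euc d, ℂ))
    (hu : ∀ ξ j, 𝓕 (u j) ξ = 𝓕 (w j) ξ
      + (((‖ξ‖ ^ 2 + ε)⁻¹ * ξ j : ℝ) : ℂ) * ∑ i, (ξ i : ℂ) * (𝓕 (v i) ξ - 𝓕 (w i) ξ))
    (φ : 𝓢(Euc d, ℝ)) (E : 𝓢(Euc d, ℂ)) (B : ℝ) (hE : ∀ x, E x = Complex.exp (φ x) - 1)
    (hB : ∀ x, |φ x| ≤ B) (hw : ∀ j, w j = v j + sm E (v j)) :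
    ∑ j, Nw (wL d) (v j - u j) ≤ Real.exp B ^ 2 * ∑ j, Nw (wL d) (sm E (u j)) := by
  have h0 := hodge_orth d ε hε v w u hu
  have hi : ∀ w : 𝓢(Euc d, ℂ), Integrable (fun x => ‖w x‖ ^ 2) := fun w => by
    simpa [wL] using schwartz_integ_sq (adm_L d) w
  have key : ∀ j, Real.exp (-B) / 2 * Nw (wL d) (v j - u j)
      - Real.exp B / 2 * Nw (wL d) (sm E (u j))
      ≤ ∫ x, (inner ℂ ((v j - u j) x) ((w j - u j) x)).re := by
    intro j
    rw [NwL_eq, NwL_eq, ← integral_const_mul, ← integral_const_mul,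
      ← integral_sub ((hi _).const_mul _) ((hi _).const_mul _)]
    refine integral_mono (((hi _).const_mul _).sub ((hi _).const_mul _))
      (integrable_inner_re _ _) fun x => ?_
    have e1 : (w j - u j) x = ((Real.exp (φ x) : ℝ) : ℂ) * (v j - u j) x + sm E (u j) x := by
      rw [hw, sub_apply, sub_apply, add_apply, sm_apply, sm_apply, hE, Complex.ofReal_exp]
      ring
    show Real.exp (-B) / 2 * ‖(v j - u j) x‖ ^ 2 - Real.exp B / 2 * ‖sm E (u j) x‖ ^ 2
      ≤ (inner ℂ ((v j - u j) x) ((w j - u j) x)).re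
    rw [e1, inner_add_right, Complex.add_re]
    set h := (v j - u j) x
    set g := sm E (u j) x
    have k1 : (inner ℂ h (((Real.exp (φ x) : ℝ) : ℂ) * h)).re = Real.exp (φ x) * ‖h‖ ^ 2 := by
      rw [Complex.sq_norm, Complex.normSq_apply]
      simp only [RCLike.inner_apply, Complex.mul_re, Complex.mul_im, Complex.ofReal_re,
        Complex.ofReal_im, Complex.conj_re, Complex.conj_im]
      ring
    have k2 : -(‖h‖ * ‖g‖) ≤ (inner ℂ h g).re := by
      have a1 := norm_inner_le_norm (𝕜 := ℂ) h g
      have a2 := (abs_le.1 (Complex.abs_re_le_norm (inner ℂ h g))).1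
      linarith
    have k3 : Real.exp (-B) ≤ Real.exp (φ x) :=
      Real.exp_le_exp.2 (by linarith [(abs_le.1 (hB x)).1])
    have k4 : Real.exp (-B) * ‖h‖ ^ 2 ≤ Real.exp (φ x) * ‖h‖ ^ 2 := by gcongr
    have k5 : ‖h‖ * ‖g‖ ≤ Real.exp (-B) / 2 * ‖h‖ ^ 2 + Real.exp B / 2 * ‖g‖ ^ 2 := by
      have a1 : Real.exp (-B) * Real.exp B = 1 := by rw [← Real.exp_add]; simp
      have a2 := Real.exp_pos (-B)
      have a3 := mul_nonneg a2.le (sq_nonneg (‖h‖ - Real.exp B * ‖g‖))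
      have a4 : Real.exp (-B) * (‖h‖ - Real.exp B * ‖g‖) ^ 2 = Real.exp (-B) * ‖h‖ ^ 2
        - 2 * ((Real.exp (-B) * Real.exp B) * (‖h‖ * ‖g‖))
        + (Real.exp (-B) * Real.exp B) * (Real.exp B * ‖g‖ ^ 2) := by ring
      rw [a4, a1] at a3
      linarith
    rw [k1]
    linarith
  have hs := Finset.sum_le_sum (s := Finset.univ) fun j _ => key j
  rw [Finset.sum_sub_distrib, ← Finset.mul_sum, ← Finset.mul_sum] at hs
  have h1 : Real.exp (-B) * ∑ j, Nw (wL d) (v j - u j) ≤ Real.exp B * ∑ j, Nw (wL d) (sm E (u j)) := by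
    linarith
  have h2 : Real.exp B * Real.exp (-B) = 1 := by rw [← Real.exp_add]; simp
  have h3 := mul_le_mul_of_nonneg_left h1 (Real.exp_pos B).le
  rw [← mul_assoc, h2, one_mul] at h3
  linarith

/-! ### Part 6: assembly -/

lemma sd_mul_exp {d : ℕ} {φ : 𝓢(Euc d, ℝ)} {E v w : 𝓢(Euc d, ℂ)}
    (hE : ∀ x, E x = Complex.exp (φ x) - 1) (hw : w = v + sm E v) (i : Fin d) (x : Euc d) :
    sd i w x = Complex.exp (φ x) * (sd i v x + sd i (cx φ) x * v x) := by
  have h0 : (⇑w : Euc d → ℂ) = fun x => Complex.exp (cx φ x) * v x := by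
    funext x; rw [hw, add_apply, sm_apply, hE, cx_apply]; ring
  have h1 : HasFDerivAt (⇑w : Euc d → ℂ) (Complex.exp (cx φ x) • fderiv ℝ v x
      + v x • (Complex.exp (cx φ x) • fderiv ℝ (cx φ) x)) x := by
    rw [h0]
    exact (((cx φ).hasFDerivAt x).cexp).mul (v.hasFDerivAt x)
  rw [sd_coe, sd_coe, sd_coe]
  unfold pd
  rw [h1.fderiv]
  simp [cx_apply]
  ring

lemma cu_eq {d : ℕ} {φ : 𝓢(Euc d, ℝ)} {E E' : 𝓢(Euc d, ℂ)} {v w : Fin d → 𝓢(Euc d, ℂ)}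
    (hE : ∀ x, E x = Complex.exp (φ x) - 1) (hE' : ∀ x, E' x = Complex.exp ((-φ) x : ℝ) - 1)
    (hw : ∀ j, w j = v j + sm E (v j)) (i j : Fin d) :
    cu v i j = (cu w i j + sm E' (cu w i j))
      + (-(sm (sd i (cx φ)) (v j)) + sm (sd j (cx φ)) (v i)) := by
  ext x
  simp only [cu, add_apply, sub_apply, neg_apply, sm_apply, sd_mul_exp hE (hw _), hE']
  have h : Complex.exp ((-φ x : ℝ) : ℂ) * Complex.exp (φ x) = 1 := by
    rw [← Complex.exp_add]; simp
  linear_combination (-(sd i (v j) x + sd i (cx φ) x * v j x) + (sd j (v i) x + sd j (cx φ) x * v i x)) * h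

lemma Nw_sub {d : ℕ} {m : Euc d → ℝ} (hm : Adm m) (u v : 𝓢(Euc d, ℂ)) :
    Nw m (u - v) ≤ 2 * Nw m u + 2 * Nw m v := by
  rw [sub_eq_add_neg, ← Nw_neg m v]; exact Nw_add hm u (-v)

lemma final_arith (c1 c2 δ D R T Gv Gu Gh Zv Zu Hh Lh q : ℝ) (hc2 : 0 ≤ c2) (hδ : 0 ≤ δ)
    (hD : 0 ≤ D) (hcd : 4 * c2 * δ ≤ 1 / 2) (hGv0 : 0 ≤ Gv) (hq : 0 ≤ q)
    (h1 : Gv ≤ c1 * R + c2 * Zv) (h2 : Zv ≤ 2 * Zu + 2 * Hh) (h2' : Zu ≤ Gu)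
    (h3 : Hh ≤ δ * Gh + D * Lh) (h4 : Gh ≤ 2 * Gv + 2 * Gu) (h5 : Lh ≤ q * Gu)
    (h6 : Gu ≤ R + 2 * T) :
    Gv ≤ (2 * c1 + (4 * c2 + 8 * c2 * δ + 4 * c2 * D * q)) * R
      + 2 * (4 * c2 + 8 * c2 * δ + 4 * c2 * D * q) * T := by
  have a1 : D * Lh ≤ D * (q * Gu) := by gcongr
  have a2 : δ * Gh ≤ δ * (2 * Gv + 2 * Gu) := by gcongr
  have a3 : Zv ≤ 2 * Gu + 2 * (δ * (2 * Gv + 2 * Gu) + D * (q * Gu)) := by linarith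
  have a4 : c2 * Zv ≤ c2 * (2 * Gu + 2 * (δ * (2 * Gv + 2 * Gu) + D * (q * Gu))) := by gcongr
  have a5 : (4 * c2 * δ) * Gv ≤ 1 / 2 * Gv := by gcongr
  have a6 : (4 * c2 + 8 * c2 * δ + 4 * c2 * D * q) * Gu
    ≤ (4 * c2 + 8 * c2 * δ + 4 * c2 * D * q) * (R + 2 * T) := by gcongr
  linarith

lemma first_arith (M c X A Bc Zv Gv Gp Cv : ℝ) (hM : 0 ≤ M) (hc : 0 ≤ c) (hA : 0 ≤ A)
    (hBc : 0 ≤ Bc) (hZ : 0 ≤ Zv) (hGp : Gp ≤ X) (hl : 4 * π ^ 2 * Gv = A + 1 / 2 * Cv)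
    (hsum : Cv ≤ (4 + 4 * M * c) * Bc + 4 * M * (4 * π ^ 2 * Gp * Zv)
      + 4 * M * (Zv * (4 * π ^ 2 * Gp))) :
    Gv ≤ (2 + 2 * M * c) * (A + Bc) + 4 * M * X * Zv := by
  have hpi : (1:ℝ) ≤ 4 * π ^ 2 := by nlinarith [Real.pi_gt_three]
  have b1 : M * (4 * π ^ 2 * Gp * Zv) ≤ M * (4 * π ^ 2 * X * Zv) := by gcongr
  have b3 : 1 * ((2 + 2 * M * c) * (A + Bc)) ≤ 4 * π ^ 2 * ((2 + 2 * M * c) * (A + Bc)) := by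
    gcongr
  have b4 : 0 ≤ M * c * A := by positivity
  have b2 : 4 * π ^ 2 * Gv ≤ 4 * π ^ 2 * ((2 + 2 * M * c) * (A + Bc) + 4 * M * X * Zv) := by
    linarith
  exact le_of_mul_le_mul_left b2 (by positivity)

lemma limit_arith (G Q c3 S : ℝ) (hc3 : 0 ≤ c3) (hS : 0 ≤ S)
    (h : ∀ ε : ℝ, 0 < ε → G ≤ Q + 2 * c3 * (ε * S)) : G ≤ Q := by
  refine le_of_forall_pos_le_add fun η hη => ?_
  have hm := h (η / (2 * c3 * S + 1)) (by positivity)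
  have : 2 * c3 * (η / (2 * c3 * S + 1) * S) ≤ η := by
    rw [show 2 * c3 * (η / (2 * c3 * S + 1) * S) = η * ((2 * c3 * S) / (2 * c3 * S + 1)) by ring]
    refine mul_le_of_le_one_right hη.le ?_
    rw [div_le_one (by positivity)]
    linarith
  linarith

lemma sqrt_arith (a G K A B : ℝ) (ha : 0 ≤ a) (hK : 0 ≤ K) (hA : 0 ≤ A) (hB : 0 ≤ B)
    (h : G ≤ K * (A + B)) :
    Real.sqrt (a * G) ≤ Real.sqrt (a * K) * (Real.sqrt A + Real.sqrt B) := by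
  calc Real.sqrt (a * G) ≤ Real.sqrt (a * K * (A + B)) := by
        apply Real.sqrt_le_sqrt
        rw [mul_assoc]
        exact mul_le_mul_of_nonneg_left h ha
    _ = Real.sqrt (a * K) * Real.sqrt (A + B) := Real.sqrt_mul (by positivity) _
    _ ≤ _ := by
        gcongr
        rw [Real.sqrt_le_left (by positivity)]
        nlinarith [Real.sq_sqrt hA, Real.sq_sqrt hB,
          mul_nonneg (Real.sqrt_nonneg A) (Real.sqrt_nonneg B)]

set_option maxHeartbeats 1000000 in
lemma main_est (d s : ℕ) (hd : 3 ≤ d) (hs : (d : ℝ) / 2 < s) (X : ℝ) : ∃ K : ℝ, 0 ≤ K ∧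
    ∀ (φ : 𝓢(Euc d, ℝ)) (E : 𝓢(Euc d, ℂ)) (v w : Fin d → 𝓢(Euc d, ℂ)),
      Nw (wH d (s + 1)) (cx φ) ≤ X → (∀ x, E x = Complex.exp (φ x) - 1) →
      (∀ j, w j = v j + sm E (v j)) →
      ∑ j, Nw (wG d s) (v j) ≤ K * (Nw (wH d s) (dv v) + ∑ i, ∑ j, Nw (wH d s) (cu w i j)) := by
  obtain ⟨c, B, hc0, hB0, hcB⟩ := E_bound d s hd hs X
  obtain ⟨M, hM0, hM⟩ := prod_est d s hd hs
  set X' := max X 0 with hX'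
  have hX0 : 0 ≤ X' := le_max_right _ _
  set c1 : ℝ := 2 + 2 * M * c with hc1
  set c2 : ℝ := 4 * M * X' with hc2
  have hc10 : 0 ≤ c1 := by positivity
  have hc20 : 0 ≤ c2 := by positivity
  set δ : ℝ := 1 / (8 * (c2 + 1)) with hδ
  have hδ0 : 0 < δ := by positivity
  have hcd : 4 * c2 * δ ≤ 1 / 2 := by
    rw [hδ, mul_one_div, div_le_div_iff₀ (by positivity) (by norm_num)]
    linarith
  set D : ℝ := (1 + 1 / δ) ^ s with hD
  have hD0 : 0 ≤ D := by positivity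
  set q : ℝ := Real.exp B ^ 2 * (M * c) with hq
  have hq0 : 0 ≤ q := by positivity
  set c3 : ℝ := 4 * c2 + 8 * c2 * δ + 4 * c2 * D * q with hc3
  have hc30 : 0 ≤ c3 := by positivity
  refine ⟨2 * c1 + c3, by positivity, fun φ E v w hφ hE hw => ?_⟩
  obtain ⟨E', hE'⟩ := exists_expm1 (-φ)
  have hcxneg : cx (-φ) = - cx φ := by
    ext x; simp [cx_apply]
  obtain ⟨hHE, hB⟩ := hcB φ E hφ hE
  obtain ⟨hHE', -⟩ := hcB (-φ) E' (by rw [hcxneg, Nw_neg]; exact hφ) hE'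
  have hφG : Nw (wG d s) (cx φ) ≤ X' :=
    le_trans (Nw_mono (adm_G d s) (adm_H d (s+1)) (wG_le d s) _) (hφ.trans (le_max_left _ _))
  have hH := adm_H d s
  have hG := adm_G d s
  have hZ := adm_Z d s
  set A := Nw (wH d s) (dv v) with hA
  set Bc := ∑ i, ∑ j, Nw (wH d s) (cu w i j) with hBc
  have hA0 : 0 ≤ A := Nw_nonneg hH _
  have hBc0 : 0 ≤ Bc := Finset.sum_nonneg fun i _ => Finset.sum_nonneg fun j _ => Nw_nonneg hH _
  have hZv0 : 0 ≤ ∑ j, Nw (wZ d s) (v j) := Finset.sum_nonneg fun j _ => Nw_nonneg hZ _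
  have hGv0 : 0 ≤ ∑ j, Nw (wG d s) (v j) := Finset.sum_nonneg fun j _ => Nw_nonneg hG _
  -- first estimate
  have h1 : ∑ j, Nw (wG d s) (v j) ≤ c1 * (A + Bc) + c2 * ∑ j, Nw (wZ d s) (v j) := by
    have hl := lagr_int d s v
    have hcu : ∀ i j, Nw (wH d s) (cu v i j) ≤ (4 + 4 * M * c) * Nw (wH d s) (cu w i j)
        + 4 * M * (Nw (wH d s) (sd i (cx φ)) * Nw (wZ d s) (v j))
        + 4 * M * (Nw (wZ d s) (v i) * Nw (wH d s) (sd j (cx φ))) := by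
      intro i j
      rw [cu_eq hE hE' hw i j]
      have a1 := Nw_add hH (cu w i j + sm E' (cu w i j))
        (-(sm (sd i (cx φ)) (v j)) + sm (sd j (cx φ)) (v i))
      have a2 := Nw_add hH (cu w i j) (sm E' (cu w i j))
      have a3 := Nw_add hH (-(sm (sd i (cx φ)) (v j))) (sm (sd j (cx φ)) (v i))
      rw [Nw_neg] at a3
      have a4 := hM (sd i (cx φ)) (v j)
      have a5 := hM (sd j (cx φ)) (v i)
      have a6 := hM E' (cu w i j)
      have a7 : M * (Nw (wH d s) E' * Nw (wZ d s) (cu w i j)) ≤ M * (c * Nw (wH d s) (cu w i j)) := by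
        gcongr
        · exact Nw_nonneg hZ _
        · exact Nw_mono hZ hH (wZ_le d s) _
      linarith
    have hsum := Finset.sum_le_sum (s := Finset.univ) fun i _ =>
      Finset.sum_le_sum (s := Finset.univ) fun j _ => hcu i j
    simp only [Finset.sum_add_distrib, ← Finset.mul_sum, ← Finset.sum_mul, sum_sd, ← hBc] at hsum
    exact first_arith M c X' A Bc _ _ _ _ hM0 hc0 hA0 hBc0 hZv0 hφG hl hsum
  set S := ∑ j, Nw (wH d s) (w j) with hS
  have hS0 : 0 ≤ S := Finset.sum_nonneg fun j _ => Nw_nonneg hH _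
  have main : ∀ ε : ℝ, 0 < ε → ∑ j, Nw (wG d s) (v j) ≤ (2 * c1 + c3) * (A + Bc) + 2 * c3 * (ε * S) := by
    intro ε hε
    obtain ⟨u, hu⟩ := hodge_exists d ε hε v w
    have h6 := hodge_G d s ε hε v w u hu
    have hco := coerc d ε hε v w u hu φ E B hE hB hw
    have h5 : ∑ j, Nw (wL d) (v j - u j) ≤ q * ∑ j, Nw (wG d s) (u j) := by
      refine hco.trans ?_
      rw [hq, mul_assoc]
      gcongr
      rw [Finset.mul_sum]
      refine Finset.sum_le_sum fun j _ => ?_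
      have a1 : Nw (wL d) (sm E (u j)) ≤ Nw (wH d s) (sm E (u j)) := by
        refine Nw_mono (adm_L d) hH (fun ξ => ?_) _
        unfold wH wL
        exact one_le_pow₀ (by nlinarith [sq_nonneg ‖ξ‖])
      refine a1.trans ((hM E (u j)).trans ?_)
      rw [mul_assoc]
      gcongr
      · exact Nw_nonneg hZ _
      · exact Nw_mono hZ hG (wZ_le_G d s) _
    have h2 : ∑ j, Nw (wZ d s) (v j) ≤ 2 * ∑ j, Nw (wZ d s) (u j) + 2 * ∑ j, Nw (wH d s) (v j - u j) := by
      rw [Finset.mul_sum, Finset.mul_sum, ← Finset.sum_add_distrib]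
      refine Finset.sum_le_sum fun j _ => ?_
      have a := Nw_add hZ (u j) (v j - u j)
      rw [add_sub_cancel] at a
      have b := Nw_mono hZ hH (wZ_le d s) (v j - u j)
      linarith
    have h2' : ∑ j, Nw (wZ d s) (u j) ≤ ∑ j, Nw (wG d s) (u j) :=
      Finset.sum_le_sum fun j _ => Nw_mono hZ hG (wZ_le_G d s) _
    have h3 : ∑ j, Nw (wH d s) (v j - u j) ≤ δ * ∑ j, Nw (wG d s) (v j - u j)
        + D * ∑ j, Nw (wL d) (v j - u j) := by
      rw [Finset.mul_sum, Finset.mul_sum, ← Finset.sum_add_distrib]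
      exact Finset.sum_le_sum fun j _ => interp d s δ hδ0 _
    have h4 : ∑ j, Nw (wG d s) (v j - u j) ≤ 2 * ∑ j, Nw (wG d s) (v j) + 2 * ∑ j, Nw (wG d s) (u j) := by
      rw [Finset.mul_sum, Finset.mul_sum, ← Finset.sum_add_distrib]
      exact Finset.sum_le_sum fun j _ => Nw_sub hG _ _
    exact final_arith c1 c2 δ D (A + Bc) (ε * S) _ _ _ _ _ _ _ q hc20 hδ0.le hD0 hcd hGv0 hq0
      h1 h2 h2' h3 h4 h5 h6
  exact limit_arith _ _ c3 S hc30 hS0 main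

lemma final_ge3 (d s : ℕ) (hd : 3 ≤ d) (hs : (d : ℝ) / 2 < s) (X : ℝ) :
    ∃ C : ℝ, ∀ (φ : 𝓢(Euc d, ℝ)) (v : Fin d → 𝓢(Euc d, ℂ)),
      hNorm d ((s : ℝ) + 1) (fun x => (φ x : ℂ)) = X →
      Real.sqrt (∑ i, ∑ j, hNormSq d s (pd d i (v j)))
        ≤ C * (hNorm d s (fun x => ∑ i, pd d i (v i) x)
            + Real.sqrt (∑ i, ∑ j, hNormSq d s
                (fun x => pd d i (fun y => Complex.exp (φ y) * v j y) x
                  - pd d j (fun y => Complex.exp (φ y) * v i y) x))) := by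
  obtain ⟨K, hK0, hK⟩ := main_est d s hd hs (X ^ 2)
  refine ⟨Real.sqrt (4 * π ^ 2 * K), fun φ v hX => ?_⟩
  obtain ⟨E, hE⟩ := exists_expm1 φ
  set w : Fin d → 𝓢(Euc d, ℂ) := fun j => v j + sm E (v j) with hw
  have hwe : ∀ j, (fun y => Complex.exp (φ y) * v j y) = ⇑(w j) := by
    intro j; funext y
    rw [hw]
    show _ = (v j + sm E (v j)) y
    rw [add_apply, sm_apply, hE]; ring
  have hφ : Nw (wH d (s + 1)) (cx φ) ≤ X ^ 2 := by
    rw [← hX, hNorm, Real.sq_sqrt]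
    · have := hNormSq_eq d (s + 1) (cx φ)
      push_cast at this
      exact this.symm.le
    · exact integral_nonneg fun ξ => by positivity
  have h := hK φ E v w hφ hE (fun j => rfl)
  have e1 : (fun x => ∑ i, pd d i (v i) x) = ⇑(dv v) := by
    funext x
    simp [dv, ← sd_coe]
  have e2 : ∀ i j, (fun x => pd d i (fun y => Complex.exp (φ y) * v j y) x
                  - pd d j (fun y => Complex.exp (φ y) * v i y) x) = ⇑(cu w i j) := by
    intro i j
    rw [hwe, hwe, ← sd_coe, ← sd_coe]
    rfl
  simp only [e1, e2]
  simp only [hNorm, ← sd_coe, hNormSq_eq]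
  have e3 : ∑ i, ∑ j, Nw (wH d s) (sd i (v j)) = 4 * π ^ 2 * ∑ j, Nw (wG d s) (v j) := by
    rw [Finset.sum_comm, Finset.mul_sum]
    exact Finset.sum_congr rfl fun j _ => sum_sd d s (v j)
  rw [e3]
  exact sqrt_arith _ _ K _ _ (by positivity) hK0 (Nw_nonneg (adm_H d s) _)
    (Finset.sum_nonneg fun i _ => Finset.sum_nonneg fun j _ => Nw_nonneg (adm_H d s) _) h

/-- Corollary 2.8: `‖∇v‖_{H^s} ≤ 𝒞(‖φ‖_{H^{s+1}})(‖div v‖_{H^s} + ‖curl(e^φ v)‖_{H^s})`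
for `d = 1` or `d ≥ 3`. -/
theorem statement8 (d s : ℕ) (hd : d = 1 ∨ 3 ≤ d) (hs : (d : ℝ) / 2 < s) :
    ∃ C : ℝ → ℝ, ∀ (φ : 𝓢(Euc d, ℝ)) (v : Fin d → 𝓢(Euc d, ℂ)),
      Real.sqrt (∑ i, ∑ j, hNormSq d s (pd d i (v j)))
        ≤ C (hNorm d ((s : ℝ) + 1) (fun x => (φ x : ℂ))) *
          (hNorm d s (fun x => ∑ i, pd d i (v i) x)
            + Real.sqrt (∑ i, ∑ j, hNormSq d s
                (fun x => pd d i (fun y => Complex.exp (φ y) * v j y) x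
                  - pd d j (fun y => Complex.exp (φ y) * v i y) x))) := by
  rcases hd with rfl | hd
  · refine ⟨fun _ => 1, fun φ v => ?_⟩
    simp only [Fin.sum_univ_one, one_mul, hNorm, Fin.isValue]
    exact le_add_of_nonneg_right (Real.sqrt_nonneg _)
  · choose C hC using final_ge3 d s hd hs
    exact ⟨C, fun φ v => hC _ φ v rfl⟩
end
end

section
/- Let d ≥ 3, s > d/2 an integer, and φ ∈ H^{s+1}(ℝᵈ). Then for any vector field w ∈ H^{s+1}(ℝᵈ), ‖∇(e^{−φ}w)‖_{H^s} ≤ 𝒞(‖φ‖_{H^{s+1}}) ‖∇w‖_{H^s} for some function 𝒞 independent of w; i.e., multiplication by e^{−φ} is bounded on homogeneous-type gradient norms in H^s. -/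
open MeasureTheory SchwartzMap
open scoped FourierTransform Real

noncomputable section

open scoped ENNReal

/-- Fourier weight. -/
def mw (d s : ℕ) (x : Euc d) : ℝ := Real.sqrt (1 + ‖x‖ ^ 2) ^ s * ‖x‖

/-- Squared weighted `L²` norm on the Fourier side. -/
def E2 (d s : ℕ) (g : Euc d → ℂ) : ℝ≥0∞ := ∫⁻ ξ, (ENNReal.ofReal (mw d s ξ) * ‖g ξ‖ₑ) ^ 2

lemma mw_nonneg (d s : ℕ) (x : Euc d) : 0 ≤ mw d s x := by unfold mw; positivity

lemma mw_cont (d s : ℕ) : Continuous (mw d s) := by unfold mw; fun_prop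

lemma mw_sq (d s : ℕ) (x : Euc d) : mw d s x ^ 2 = (1 + ‖x‖ ^ 2) ^ s * ‖x‖ ^ 2 := by
  unfold mw
  rw [mul_pow, ← pow_mul, mul_comm s 2, pow_mul, Real.sq_sqrt (by positivity)]

lemma mw_aux (d s : ℕ) (x y : Euc d) (h : ‖x‖ ≤ 2 * ‖y‖) : mw d s x ≤ 2 ^ (s + 1) * mw d s y := by
  have h1 : Real.sqrt (1 + ‖x‖ ^ 2) ≤ 2 * Real.sqrt (1 + ‖y‖ ^ 2) := by
    apply Real.sqrt_le_iff.2
    refine ⟨by positivity, ?_⟩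
    rw [mul_pow, Real.sq_sqrt (by positivity)]
    have := norm_nonneg x
    nlinarith
  unfold mw
  calc _ ≤ (2 * Real.sqrt (1 + ‖y‖ ^ 2)) ^ s * (2 * ‖y‖) := by gcongr
    _ = _ := by ring

lemma mw_add (d s : ℕ) (x y : Euc d) : mw d s x ≤ 2 ^ (s + 1) * (mw d s y + mw d s (x - y)) := by
  have hx : ‖x‖ ≤ ‖y‖ + ‖x - y‖ := by
    calc ‖x‖ = ‖y + (x - y)‖ := by congr 1; abel
      _ ≤ _ := norm_add_le _ _
  have p1 := mw_nonneg d s y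
  have p2 := mw_nonneg d s (x - y)
  rcases le_total ‖y‖ ‖x - y‖ with h | h
  · refine (mw_aux d s x (x - y) (by linarith)).trans ?_
    gcongr; linarith
  · refine (mw_aux d s x y (by linarith)).trans ?_
    gcongr; linarith

lemma cs {α : Type*} [MeasurableSpace α] (μ : Measure α) {f g : α → ℝ≥0∞}
    (hf : AEMeasurable f μ) (hg : AEMeasurable g μ) :
    (∫⁻ a, f a * g a ∂μ) ^ 2 ≤ (∫⁻ a, f a ^ 2 ∂μ) * ∫⁻ a, g a ^ 2 ∂μ := by
  have h := ENNReal.lintegral_mul_le_Lp_mul_Lq μ Real.HolderConjugate.two_two hf hg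
  simp only [Pi.mul_apply] at h
  calc _ ≤ _ := pow_le_pow_left' h 2
    _ = _ := by
      rw [mul_pow, ← ENNReal.rpow_natCast, ← ENNReal.rpow_natCast, ← ENNReal.rpow_mul,
        ← ENNReal.rpow_mul]
      norm_num

lemma young (d : ℕ) {a b : Euc d → ℝ≥0∞} (ha : Measurable a) (hb : Measurable b) :
    ∫⁻ ξ, (∫⁻ η, a η * b (ξ - η)) ^ 2 ≤ (∫⁻ η, a η) ^ 2 * ∫⁻ η, b η ^ 2 := by
  have h1 : ∀ ξ, (∫⁻ η, a η * b (ξ - η)) ^ 2 ≤ (∫⁻ η, a η) * ∫⁻ η, a η * b (ξ - η) ^ 2 := by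
    intro ξ
    have := cs volume (f := fun η => a η ^ (1/2 : ℝ)) (g := fun η => a η ^ (1/2 : ℝ) * b (ξ - η))
      (by fun_prop) (by fun_prop)
    have e : ∀ η, a η ^ (1/2 : ℝ) * a η ^ (1/2 : ℝ) = a η := by
      intro η
      rw [← ENNReal.rpow_add_of_nonneg _ _ (by norm_num) (by norm_num)]; norm_num
    have e2 : ∀ η, (a η ^ (1/2 : ℝ) * b (ξ - η)) ^ 2 = a η * b (ξ - η) ^ 2 := by
      intro η; rw [mul_pow, sq (a η ^ (1/2 : ℝ)), e]
    have e3 : ∀ η, (a η ^ (1/2 : ℝ)) ^ 2 = a η := by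
      intro η; rw [sq, e]
    simpa only [e2, e3, ← mul_assoc, e] using this
  calc _ ≤ ∫⁻ ξ, (∫⁻ η, a η) * ∫⁻ η, a η * b (ξ - η) ^ 2 := lintegral_mono h1
    _ = (∫⁻ η, a η) * ∫⁻ ξ, ∫⁻ η, a η * b (ξ - η) ^ 2 := by
      rw [lintegral_const_mul]
      exact Measurable.lintegral_prod_right' (f := fun p : Euc d × Euc d => a p.2 * b (p.1 - p.2) ^ 2)
        (by fun_prop)
    _ = (∫⁻ η, a η) * ∫⁻ η, ∫⁻ ξ, a η * b (ξ - η) ^ 2 := by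
      rw [lintegral_lintegral_swap]
      fun_prop
    _ = (∫⁻ η, a η) * ∫⁻ η, a η * ∫⁻ ξ, b ξ ^ 2 := by
      congr 2; ext η
      rw [lintegral_const_mul _ (by fun_prop), lintegral_sub_right_eq_self (fun ξ => b ξ ^ 2)]
    _ = _ := by
      rw [lintegral_mul_const _ ha]; ring

lemma add_sq_le4 (x y : ℝ≥0∞) : (x + y) ^ 2 ≤ 4 * (x ^ 2 + y ^ 2) := by
  rcases le_total x y with h | h
  · calc _ ≤ (y + y) ^ 2 := by gcongr
      _ = 4 * y ^ 2 := by ring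
      _ ≤ _ := by gcongr; exact le_add_self
  · calc _ ≤ (x + x) ^ 2 := by gcongr
      _ = 4 * x ^ 2 := by ring
      _ ≤ _ := by gcongr; exact le_self_add

/-- The constant in the `L¹` bound. -/
def K1 (d s : ℕ) : ℝ≥0∞ := ∫⁻ ξ : Euc d, (ENNReal.ofReal (mw d s ξ))⁻¹ ^ 2

lemma K1_ne_top (d s : ℕ) (hd : 3 ≤ d) (hs : (d : ℝ) / 2 < s) : K1 d s ≠ ∞ := by
  have hfr : Module.finrank ℝ (Euc d) = d := by simp
  have hmeas : AEStronglyMeasurable (fun ξ : Euc d => (mw d s ξ ^ 2)⁻¹) volume :=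
    (((mw_cont d s).measurable.pow_const 2).inv).aestronglyMeasurable
  have hIntg : Integrable (fun ξ : Euc d => (mw d s ξ ^ 2)⁻¹) volume := by
    rw [← integrableOn_univ, ← Set.union_compl_self (Metric.ball (0 : Euc d) 1)]
    apply IntegrableOn.union
    · refine integrableOn_ball_of_norm_le_rpow (C := 1) (α := 2) ?_ ?_ ?_ ?_
      · rw [hfr]; omega
      · rw [hfr]; exact_mod_cast hd
      · refine Filter.Eventually.of_forall fun x => ?_
        rw [Real.norm_of_nonneg (by positivity), one_mul, mw_sq, mul_inv,
          Real.rpow_neg (norm_nonneg _)]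
        norm_cast
        apply mul_le_of_le_one_left (by positivity)
        apply inv_le_one_of_one_le₀
        apply one_le_pow₀
        nlinarith [norm_nonneg x]
      · exact hmeas
    · have h2 := integrable_rpow_neg_one_add_norm_sq (E := Euc d) (μ := volume) (r := 2 * s)
        (by rw [hfr]; linarith)
      refine Integrable.mono' h2.integrableOn hmeas.restrict ?_
      refine (ae_restrict_iff' (measurableSet_ball.compl)).2 (Filter.Eventually.of_forall ?_)
      intro x hx
      have hx : 1 ≤ ‖x‖ := by simpa using hx
      rw [Real.norm_of_nonneg (by positivity), mw_sq, mul_inv,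
        show (-(2 * (s : ℝ)) / 2) = -(s : ℝ) by ring, Real.rpow_neg (by positivity),
        Real.rpow_natCast]
      apply mul_le_of_le_one_right (by positivity)
      apply inv_le_one_of_one_le₀
      exact one_le_pow₀ hx
  have h3 := hIntg.lintegral_lt_top
  refine ne_of_lt (lt_of_eq_of_lt ?_ h3)
  apply lintegral_congr_ae
  have : NeZero d := ⟨by omega⟩
  have hnt : Nontrivial (Euc d) := Module.nontrivial_of_finrank_pos (R := ℝ) (by rw [hfr]; omega)
  have : ∀ᵐ x : Euc d, x ≠ 0 := by
    simp [ae_iff]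
  filter_upwards [this] with x hx
  have hp : 0 < mw d s x := by unfold mw; have := norm_pos_iff.2 hx; positivity
  rw [ENNReal.ofReal_inv_of_pos (by positivity), ENNReal.ofReal_pow hp.le, ENNReal.inv_pow]

lemma l1_bound (d s : ℕ) (hd : 3 ≤ d) {g : Euc d → ℂ} (hg : Continuous g) :
    (∫⁻ ξ, ‖g ξ‖ₑ) ^ 2 ≤ K1 d s * E2 d s g := by
  have hfr : Module.finrank ℝ (Euc d) = d := by simp
  have hnt : Nontrivial (Euc d) := Module.nontrivial_of_finrank_pos (R := ℝ) (by rw [hfr]; omega)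
  have : ∀ᵐ x : Euc d, x ≠ 0 := by
    simp [ae_iff]
  have hm := (mw_cont d s).measurable
  have hgm := hg.measurable
  calc _ = (∫⁻ ξ, (ENNReal.ofReal (mw d s ξ))⁻¹ * (ENNReal.ofReal (mw d s ξ) * ‖g ξ‖ₑ)) ^ 2 := by
        congr 1
        apply lintegral_congr_ae
        filter_upwards [this] with x hx
        have hp : 0 < mw d s x := by unfold mw; have := norm_pos_iff.2 hx; positivity
        rw [← mul_assoc, ENNReal.inv_mul_cancel (by simpa using hp) (by simp), one_mul]
    _ ≤ _ := cs volume (by fun_prop) (by fun_prop)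

lemma conv_bound (d s : ℕ) (hd : 3 ≤ d) {a b c : Euc d → ℂ} (ha : Continuous a)
    (hb : Continuous b) (hc : ∀ ξ, ‖c ξ‖ₑ ≤ ∫⁻ η, ‖a η‖ₑ * ‖b (ξ - η)‖ₑ) :
    E2 d s c ≤ ((2 ^ (s + 1)) ^ 2 * 8 * K1 d s) * E2 d s a * E2 d s b := by
  have hm := (mw_cont d s).measurable
  have ham := ha.measurable
  have hbm := hb.measurable
  set A : Euc d → ℝ≥0∞ := fun η => ENNReal.ofReal (mw d s η) * ‖a η‖ₑ with hA
  set B : Euc d → ℝ≥0∞ := fun η => ENNReal.ofReal (mw d s η) * ‖b η‖ₑ with hB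
  have hAm : Measurable A := by fun_prop
  have hBm : Measurable B := by fun_prop
  have key : ∀ ξ, ENNReal.ofReal (mw d s ξ) * ‖c ξ‖ₑ ≤ 2 ^ (s + 1) *
      ((∫⁻ η, ‖b η‖ₑ * A (ξ - η)) + ∫⁻ η, ‖a η‖ₑ * B (ξ - η)) := by
    intro ξ
    have e1 : ∫⁻ η, ‖b η‖ₑ * A (ξ - η) = ∫⁻ η, A η * ‖b (ξ - η)‖ₑ := by
      rw [← lintegral_sub_left_eq_self _ ξ]
      simp [mul_comm]
    rw [e1, ← lintegral_add_left (by fun_prop), ← lintegral_const_mul _ (by fun_prop)]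
    refine (mul_le_mul_right (hc ξ) _).trans ?_
    rw [← lintegral_const_mul _ (by fun_prop)]
    apply lintegral_mono
    intro η
    have h := ENNReal.ofReal_le_ofReal (mw_add d s ξ η)
    rw [ENNReal.ofReal_mul (by positivity), ENNReal.ofReal_add (mw_nonneg _ _ _) (mw_nonneg _ _ _),
      ENNReal.ofReal_pow (by norm_num), ENNReal.ofReal_ofNat] at h
    calc _ ≤ _ := mul_le_mul_left h _
      _ = _ := by simp only [hA, hB]; ring
  calc E2 d s c ≤ ∫⁻ ξ, (2 ^ (s + 1)) ^ 2 * (4 *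
      ((∫⁻ η, ‖b η‖ₑ * A (ξ - η)) ^ 2 + (∫⁻ η, ‖a η‖ₑ * B (ξ - η)) ^ 2)) := by
        apply lintegral_mono
        intro ξ
        refine (pow_le_pow_left' (key ξ) 2).trans ?_
        rw [mul_pow]
        exact mul_le_mul_right (add_sq_le4 _ _) _
    _ = (2 ^ (s + 1)) ^ 2 * (4 * ((∫⁻ ξ, (∫⁻ η, ‖b η‖ₑ * A (ξ - η)) ^ 2)
          + ∫⁻ ξ, (∫⁻ η, ‖a η‖ₑ * B (ξ - η)) ^ 2)) := by
        have m1 : Measurable fun ξ => ∫⁻ η, ‖b η‖ₑ * A (ξ - η) :=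
          Measurable.lintegral_prod_right' (f := fun p : Euc d × Euc d => ‖b p.2‖ₑ * A (p.1 - p.2))
            (by fun_prop)
        have m2 : Measurable fun ξ => ∫⁻ η, ‖a η‖ₑ * B (ξ - η) :=
          Measurable.lintegral_prod_right' (f := fun p : Euc d × Euc d => ‖a p.2‖ₑ * B (p.1 - p.2))
            (by fun_prop)
        rw [lintegral_const_mul _ (by fun_prop), lintegral_const_mul _ (by fun_prop),
          lintegral_add_left (by fun_prop)]
    _ ≤ (2 ^ (s + 1)) ^ 2 * (4 * (K1 d s * E2 d s b * E2 d s a + K1 d s * E2 d s a * E2 d s b)) := by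
        gcongr
        · exact (young d (by fun_prop) hAm).trans (mul_le_mul_left (l1_bound d s hd hb) _)
        · exact (young d (by fun_prop) hBm).trans (mul_le_mul_left (l1_bound d s hd ha) _)
    _ = _ := by ring

/-- Product of Schwartz functions. -/
def smulS (d : ℕ) (f g : 𝓢(Euc d, ℂ)) : 𝓢(Euc d, ℂ) :=
  SchwartzMap.pairing (ContinuousLinearMap.mul ℂ ℂ) f g

lemma smulS_apply (d : ℕ) (f g : 𝓢(Euc d, ℂ)) (x : Euc d) : smulS d f g x = f x * g x := by
  simp [smulS]

lemma fourier_neg_eq (d : ℕ) (f : 𝓢(Euc d, ℂ)) (x : Euc d) : (𝓕⁻ f) x = 𝓕 (f : Euc d → ℂ) (-x) := by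
  rw [SchwartzMap.fourierInv_coe, Real.fourierInv_eq_fourier_neg]

lemma fourier_prod (d : ℕ) (f g : 𝓢(Euc d, ℂ)) (ξ : Euc d) :
    𝓕 (smulS d f g : Euc d → ℂ) ξ = ∫ η, 𝓕 (f : Euc d → ℂ) η * 𝓕 (g : Euc d → ℂ) (ξ - η) := by
  have h := SchwartzMap.convolution_apply (ContinuousLinearMap.mul ℂ ℂ) (𝓕⁻ f) (𝓕⁻ g) (-ξ)
  have h2 : SchwartzMap.convolution (ContinuousLinearMap.mul ℂ ℂ) (𝓕⁻ f) (𝓕⁻ g)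
      = 𝓕⁻ (smulS d f g) := by
    simp [SchwartzMap.convolution, smulS]
  rw [h2, fourier_neg_eq, neg_neg] at h
  rw [h, convolution_def]
  simp only [ContinuousLinearMap.mul_apply', fourier_neg_eq]
  rw [← integral_neg_eq_self]
  congr 1; ext η
  congr 2
  · simp
  · abel_nf

lemma fourier_cont (d : ℕ) {u : Euc d → ℂ} (hu : Integrable u) : Continuous (𝓕 u) :=
  VectorFourier.fourierIntegral_continuous Real.continuous_fourierChar
    (by exact continuous_inner) hu

lemma E2_prod (d s : ℕ) (hd : 3 ≤ d) (f g : 𝓢(Euc d, ℂ)) :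
    E2 d s (𝓕 (smulS d f g : Euc d → ℂ)) ≤ ((2 ^ (s + 1)) ^ 2 * 8 * K1 d s) *
      E2 d s (𝓕 (f : Euc d → ℂ)) * E2 d s (𝓕 (g : Euc d → ℂ)) := by
  apply conv_bound d s hd (fourier_cont d f.integrable) (fourier_cont d g.integrable)
  intro ξ
  rw [fourier_prod]
  refine (enorm_integral_le_lintegral_enorm _).trans ?_
  simp

/-- Iterated products. -/
def itp (d : ℕ) (f g : 𝓢(Euc d, ℂ)) : ℕ → 𝓢(Euc d, ℂ)
  | 0 => g
  | n + 1 => smulS d f (itp d f g n)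

lemma itp_apply (d : ℕ) (f g : 𝓢(Euc d, ℂ)) (n : ℕ) (x : Euc d) :
    itp d f g n x = f x ^ n * g x := by
  induction n with
  | zero => simp [itp]
  | succ n ih => rw [itp, smulS_apply, ih]; ring

lemma E2_itp (d s : ℕ) (hd : 3 ≤ d) (f g : 𝓢(Euc d, ℂ)) (n : ℕ) :
    E2 d s (𝓕 (itp d f g n : Euc d → ℂ)) ≤ (((2 ^ (s + 1)) ^ 2 * 8 * K1 d s) *
      E2 d s (𝓕 (f : Euc d → ℂ))) ^ n * E2 d s (𝓕 (g : Euc d → ℂ)) := by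
  induction n with
  | zero => simp [itp]
  | succ n ih =>
    rw [itp]
    refine (E2_prod d s hd _ _).trans ?_
    rw [pow_succ' _ n, mul_assoc _ (_ ^ n) _]
    exact mul_le_mul_right ih _

/-- Exponential on `ℝ≥0∞`. -/
def ec (X : ℝ≥0∞) : ℝ≥0∞ := ∑' n : ℕ, ((n.factorial : ℝ≥0∞))⁻¹ * X ^ n

lemma ec_ne_top {X : ℝ≥0∞} (hX : X ≠ ∞) : ec X ≠ ∞ := by
  obtain ⟨x, hx, rfl⟩ : ∃ x : ℝ, 0 ≤ x ∧ X = ENNReal.ofReal x :=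
    ⟨X.toReal, ENNReal.toReal_nonneg, (ENNReal.ofReal_toReal hX).symm⟩
  have h := ENNReal.ofReal_tsum_of_nonneg (f := fun n : ℕ => x ^ n / (n.factorial : ℝ))
    (fun n => by positivity) (Real.summable_pow_div_factorial x)
  have : ec (ENNReal.ofReal x) = ∑' n : ℕ, ENNReal.ofReal (x ^ n / (n.factorial : ℝ)) := by
    unfold ec
    congr 1; ext n
    rw [div_eq_inv_mul, ENNReal.ofReal_mul (by positivity), ENNReal.ofReal_inv_of_pos (by positivity),
      ENNReal.ofReal_pow hx, ENNReal.ofReal_natCast]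
  rw [this, ← h]
  exact ENNReal.ofReal_ne_top

lemma enorm_coef (n : ℕ) : ‖((-1 : ℂ) ^ n * ((n.factorial : ℂ))⁻¹)‖ₑ = ((n.factorial : ℝ≥0∞))⁻¹ := by
  rw [enorm_mul, enorm_pow, enorm_inv (by exact_mod_cast n.factorial_ne_zero)]
  simp only [enorm_neg, enorm_one, one_pow, one_mul]
  congr 1
  rw [← ofReal_norm, Complex.norm_natCast, ENNReal.ofReal_natCast]

lemma bdd (d : ℕ) (f : 𝓢(Euc d, ℂ)) : ∃ B : ℝ, 0 ≤ B ∧ ∀ x, ‖f x‖ ≤ B :=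
  ⟨SchwartzMap.seminorm ℝ 0 0 f, apply_nonneg _ _, fun x => SchwartzMap.norm_le_seminorm ℝ f x⟩

lemma fourier_exp (d : ℕ) (f g : 𝓢(Euc d, ℂ)) (ξ : Euc d) :
    ‖𝓕 (fun y => Complex.exp (-(f y)) * g y) ξ‖ₑ ≤
      ∑' n : ℕ, ((n.factorial : ℝ≥0∞))⁻¹ * ‖𝓕 (itp d f g n : Euc d → ℂ) ξ‖ₑ := by
  obtain ⟨B, hB0, hB⟩ := bdd d f
  set c : ℕ → ℂ := fun n => (-1 : ℂ) ^ n * ((n.factorial : ℂ))⁻¹ with hc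
  have h1 : 𝓕 (fun y => Complex.exp (-(f y)) * g y) ξ
      = ∑' n, c n * 𝓕 (itp d f g n : Euc d → ℂ) ξ := by
    rw [Real.fourier_eq]
    have e1 : ∀ n, c n * 𝓕 (itp d f g n : Euc d → ℂ) ξ =
        ∫ y, Real.fourierChar (-(inner ℝ y ξ)) • (c n * itp d f g n y) := by
      intro n
      rw [Real.fourier_eq, ← integral_const_mul]
      congr 1; ext y
      rw [Circle.smul_def, Circle.smul_def, smul_eq_mul, smul_eq_mul]; ring
    simp only [e1]
    rw [← integral_tsum]
    · congr 1; ext y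
      have hs := NormedSpace.expSeries_div_hasSum_exp (𝔸 := ℂ) (-(f y))
      rw [← Complex.exp_eq_exp_ℂ] at hs
      have := ((hs.mul_right (g y)).const_smul (Real.fourierChar (-(inner ℝ y ξ)))).tsum_eq
      rw [← this]
      congr 1; ext n
      rw [itp_apply, hc]
      congr 1
      rw [neg_pow]; ring
    · intro n
      have : Continuous fun y : Euc d => Real.fourierChar (-(inner ℝ y ξ)) • (c n * itp d f g n y) := by
        have := (itp d f g n).continuous
        have := Real.continuous_fourierChar
        fun_prop
      exact this.aestronglyMeasurable
    · have : ∀ n, ∫⁻ y, ‖Real.fourierChar (-(inner ℝ y ξ)) • (c n * itp d f g n y)‖ₑ ≤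
          (((n.factorial : ℝ≥0∞))⁻¹ * (ENNReal.ofReal B) ^ n) * ∫⁻ y, ‖g y‖ₑ := by
        intro n
        rw [← lintegral_const_mul _ (by have := g.continuous.measurable; fun_prop)]
        apply lintegral_mono
        intro y
        have hb : ‖f y‖ₑ ≤ ENNReal.ofReal B := by
          rw [← ofReal_norm]; exact ENNReal.ofReal_le_ofReal (hB y)
        have e : ‖Real.fourierChar (-(inner ℝ y ξ)) • (c n * itp d f g n y)‖ₑ
            = ‖c n * itp d f g n y‖ₑ := by
          rw [← ofReal_norm, ← ofReal_norm, Circle.norm_smul]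
        simp only [e]
        rw [itp_apply, enorm_mul, enorm_coef, enorm_mul, enorm_pow, ← mul_assoc]
        gcongr
      refine ne_top_of_le_ne_top ?_ (ENNReal.tsum_le_tsum this)
      rw [ENNReal.tsum_mul_right]
      exact ENNReal.mul_ne_top (ec_ne_top ENNReal.ofReal_ne_top) g.integrable.2.ne
  rw [h1]
  refine enorm_tsum_le_tsum_enorm.trans ?_
  exact le_of_eq (by congr 1; ext n; rw [enorm_mul, hc, enorm_coef])

lemma E2_exp (d s : ℕ) (hd : 3 ≤ d) (f g : 𝓢(Euc d, ℂ)) :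
    E2 d s (𝓕 (fun y => Complex.exp (-(f y)) * g y)) ≤
      ec 1 * ec (((2 ^ (s + 1)) ^ 2 * 8 * K1 d s) * E2 d s (𝓕 (f : Euc d → ℂ))) *
        E2 d s (𝓕 (g : Euc d → ℂ)) := by
  have hm := (mw_cont d s).measurable
  have hcm : ∀ n, Measurable (𝓕 (itp d f g n : Euc d → ℂ)) := fun n =>
    (fourier_cont d (itp d f g n).integrable).measurable
  have csum : ∀ a : ℕ → ℝ≥0∞, (∑' n : ℕ, ((n.factorial : ℝ≥0∞))⁻¹ * a n) ^ 2 ≤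
      ec 1 * ∑' n : ℕ, ((n.factorial : ℝ≥0∞))⁻¹ * a n ^ 2 := by
    intro a
    have e : ∀ n : ℕ, (((n.factorial : ℝ≥0∞))⁻¹) ^ (1/2 : ℝ) * (((n.factorial : ℝ≥0∞))⁻¹) ^ (1/2 : ℝ)
        = ((n.factorial : ℝ≥0∞))⁻¹ := by
      intro n
      rw [← ENNReal.rpow_add_of_nonneg _ _ (by norm_num) (by norm_num)]; norm_num
    have := cs (Measure.count : Measure ℕ) (f := fun n => (((n.factorial : ℝ≥0∞))⁻¹) ^ (1/2 : ℝ))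
      (g := fun n => (((n.factorial : ℝ≥0∞))⁻¹) ^ (1/2 : ℝ) * a n)
      (Measurable.of_discrete.aemeasurable) (Measurable.of_discrete.aemeasurable)
    simp only [lintegral_count] at this
    have e2 : ∀ n : ℕ, ((((n.factorial : ℝ≥0∞))⁻¹) ^ (1/2 : ℝ) * a n) ^ 2
        = ((n.factorial : ℝ≥0∞))⁻¹ * a n ^ 2 := by
      intro n; rw [mul_pow, sq (_ ^ (1/2 : ℝ)), e]
    have e3 : ∀ n : ℕ, ((((n.factorial : ℝ≥0∞))⁻¹) ^ (1/2 : ℝ)) ^ 2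
        = ((n.factorial : ℝ≥0∞))⁻¹ := by
      intro n; rw [sq, e]
    simpa only [e2, e3, ← mul_assoc, e, ec, one_pow, mul_one] using this
  calc _ ≤ ∫⁻ ξ, ec 1 * ∑' n : ℕ, ((n.factorial : ℝ≥0∞))⁻¹ *
          (ENNReal.ofReal (mw d s ξ) * ‖𝓕 (itp d f g n : Euc d → ℂ) ξ‖ₑ) ^ 2 := by
        apply lintegral_mono
        intro ξ
        refine le_trans ?_ (csum _)
        refine pow_le_pow_left' ?_ 2
        refine (mul_le_mul_right (fourier_exp d f g ξ) _).trans ?_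
        rw [← ENNReal.tsum_mul_left]
        refine le_of_eq ?_
        congr 1; ext n; ring
    _ = ec 1 * ∑' n : ℕ, ((n.factorial : ℝ≥0∞))⁻¹ * E2 d s (𝓕 (itp d f g n : Euc d → ℂ)) := by
        rw [lintegral_const_mul _ (by fun_prop), lintegral_tsum (fun n => by fun_prop)]
        congr 2; ext n
        rw [lintegral_const_mul _ (by fun_prop)]; rfl
    _ ≤ ec 1 * ∑' n : ℕ, ((n.factorial : ℝ≥0∞))⁻¹ * ((((2 ^ (s + 1)) ^ 2 * 8 * K1 d s) *
      E2 d s (𝓕 (f : Euc d → ℂ))) ^ n * E2 d s (𝓕 (g : Euc d → ℂ))) := by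
        gcongr with n
        exact E2_itp d s hd f g n
    _ = _ := by
        simp only [← mul_assoc]
        rw [ENNReal.tsum_mul_right, ← mul_assoc, ec, ec]

lemma schwartz_int (d s : ℕ) (f : 𝓢(Euc d, ℂ)) :
    Integrable (fun ξ : Euc d => (1 + ‖ξ‖ ^ 2) ^ (s + 1) * ‖𝓕 (f : Euc d → ℂ) ξ‖ ^ 2) := by
  have ht : (fun ξ : Euc d => (1 + ‖ξ‖ ^ 2) ^ (s + 1)).HasTemperateGrowth := by
    fun_prop
  have h := (smulS d (SchwartzMap.smulLeftCLM ℂ (fun ξ : Euc d => (1 + ‖ξ‖ ^ 2) ^ (s + 1)) (𝓕 f))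
    (𝓕 f)).integrable (μ := volume) |>.norm
  refine h.congr (Filter.Eventually.of_forall fun ξ => ?_)
  simp only [smulS_apply]
  rw [SchwartzMap.smulLeftCLM_apply_apply ht, SchwartzMap.fourier_coe, norm_mul, norm_smul,
    Real.norm_of_nonneg (by positivity)]
  ring

lemma E2_le_hNorm (d s : ℕ) (f : 𝓢(Euc d, ℂ)) :
    E2 d s (𝓕 (f : Euc d → ℂ)) ≤ ENNReal.ofReal (hNorm d ((s : ℝ) + 1) f ^ 2) := by
  have hi := schwartz_int d s f
  have e : hNorm d ((s : ℝ) + 1) f ^ 2 =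
      ∫ ξ : Euc d, (1 + ‖ξ‖ ^ 2) ^ (s + 1) * ‖𝓕 (f : Euc d → ℂ) ξ‖ ^ 2 := by
    unfold hNorm hNormSq
    rw [Real.sq_sqrt (integral_nonneg fun ξ => by positivity)]
    congr 1; ext ξ
    rw [← Real.rpow_natCast _ (s + 1)]; push_cast; rfl
  rw [e, ofReal_integral_eq_lintegral_ofReal hi (Filter.Eventually.of_forall fun ξ => by positivity)]
  apply lintegral_mono
  intro ξ
  simp only
  rw [← ofReal_norm, ← ENNReal.ofReal_mul (mw_nonneg _ _ _),
    ← ENNReal.ofReal_pow (mul_nonneg (mw_nonneg _ _ _) (norm_nonneg _)), mul_pow, mw_sq,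
    pow_succ _ s]
  gcongr
  linarith

lemma fourier_pd (d : ℕ) (i : Fin d) {u : Euc d → ℂ} (h1 : Integrable u)
    (h2 : Differentiable ℝ u) (h3 : Integrable (fderiv ℝ u)) (ξ : Euc d) :
    ‖𝓕 (pd d i u) ξ‖ ^ 2 = (2 * π) ^ 2 * ξ i ^ 2 * ‖𝓕 u ξ‖ ^ 2 := by
  have := congrFun (Real.fourier_fderiv h1 h2 h3) ξ
  have e : 𝓕 (pd d i u) ξ = (𝓕 (fderiv ℝ u) ξ) (EuclideanSpace.single i 1) := by
    rw [Real.fourier_continuousLinearMap_apply h3]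
    rfl
  rw [e, this]
  simp [mul_pow]
  rw [innerSL_apply_apply, EuclideanSpace.inner_single_right]
  simp
  ring

lemma grad_eq (d s : ℕ) {u : Euc d → ℂ} (h1 : Integrable u)
    (h2 : Differentiable ℝ u) (h3 : Integrable (fderiv ℝ u)) (hE : E2 d s (𝓕 u) ≠ ∞) :
    ∑ i, hNormSq d s (pd d i u) = (2 * π) ^ 2 * (E2 d s (𝓕 u)).toReal := by
  have hc := fourier_cont d h1
  set I : Fin d → Euc d → ℝ := fun i ξ =>
    (1 + ‖ξ‖ ^ 2) ^ s * ((2 * π) ^ 2 * ξ i ^ 2 * ‖𝓕 u ξ‖ ^ 2) with hI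
  have hIc : ∀ i, Continuous (I i) := fun i => by simp only [hI]; fun_prop
  have hI0 : ∀ i ξ, 0 ≤ I i ξ := fun i ξ => by simp only [hI]; positivity
  have e1 : ∀ i, hNormSq d s (pd d i u) = (∫⁻ ξ, ENNReal.ofReal (I i ξ)).toReal := by
    intro i
    rw [← integral_eq_lintegral_of_nonneg_ae (Filter.Eventually.of_forall (hI0 i))
      (hIc i).aestronglyMeasurable]
    unfold hNormSq
    congr 1; ext ξ
    rw [fourier_pd d i h1 h2 h3, Real.rpow_natCast]
  have e2 : ∑ i, ∫⁻ ξ, ENNReal.ofReal (I i ξ) = ENNReal.ofReal ((2 * π) ^ 2) * E2 d s (𝓕 u) := by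
    have hm := (mw_cont d s).measurable
    have hcm := hc.measurable
    rw [← lintegral_finsetSum _ (fun i _ => by have := (hIc i).measurable; fun_prop), E2,
      ← lintegral_const_mul _ (by fun_prop)]
    congr 1; ext ξ
    rw [← ENNReal.ofReal_sum_of_nonneg (fun i _ => hI0 i ξ), ← ofReal_norm,
      ← ENNReal.ofReal_mul (mw_nonneg _ _ _),
      ← ENNReal.ofReal_pow (mul_nonneg (mw_nonneg _ _ _) (norm_nonneg _)), mul_pow (mw d s ξ), mw_sq,
      ← ENNReal.ofReal_mul (by positivity)]
    congr 1
    simp only [hI]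
    rw [← Finset.mul_sum, ← Finset.sum_mul, ← Finset.mul_sum]
    have : ∑ i, ξ i ^ 2 = ‖ξ‖ ^ 2 := by
      rw [EuclideanSpace.norm_sq_eq]; simp
    rw [this]; ring
  simp only [e1]
  rw [← ENNReal.toReal_sum, e2, ENNReal.toReal_mul, ENNReal.toReal_ofReal (by positivity)]
  intro i hi
  have : ∫⁻ ξ, ENNReal.ofReal (I i ξ) ≤ ∑ i, ∫⁻ ξ, ENNReal.ofReal (I i ξ) :=
    Finset.single_le_sum (f := fun i => ∫⁻ ξ, ENNReal.ofReal (I i ξ)) (fun _ _ => zero_le) hi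
  refine ne_top_of_le_ne_top ?_ this
  rw [e2]
  exact ENNReal.mul_ne_top ENNReal.ofReal_ne_top hE

lemma exp_reg (d : ℕ) (f g : 𝓢(Euc d, ℂ)) :
    Integrable (fun y => Complex.exp (-(f y)) * g y) ∧
    Differentiable ℝ (fun y => Complex.exp (-(f y)) * g y) ∧
    Integrable (fderiv ℝ (fun y => Complex.exp (-(f y)) * g y)) := by
  obtain ⟨B, hB0, hB⟩ := bdd d f
  obtain ⟨Bg, hBg0, hBg⟩ := bdd d g
  have hf := f.differentiable
  have hg := g.differentiable
  have hfc := f.continuous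
  have hexp : ∀ y, ‖Complex.exp (-(f y))‖ ≤ Real.exp B := by
    intro y
    rw [Complex.norm_exp]
    refine Real.exp_le_exp.2 ((Complex.re_le_norm _).trans ?_)
    rw [norm_neg]; exact hB y
  have hec : Continuous fun y => Complex.exp (-(f y)) := by fun_prop
  have key : ∀ {F : Type} [NormedAddCommGroup F] [NormedSpace ℂ F] {h : Euc d → F},
      Integrable h → Integrable (fun y => Complex.exp (-(f y)) • h y) := by
    intro F _ _ h hh
    exact hh.bdd_smul (Real.exp B) hec.aestronglyMeasurable (Filter.Eventually.of_forall hexp)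
  refine ⟨key g.integrable, by fun_prop, ?_⟩
  have e : fderiv ℝ (fun y => Complex.exp (-(f y)) * g y) = fun y =>
      Complex.exp (-(f y)) • (fderiv ℝ g y - g y • fderiv ℝ f y) := by
    ext1 y
    have h1 : HasFDerivAt (fun y => Complex.exp (-(f y)))
        (Complex.exp (-(f y)) • (-(fderiv ℝ f y))) y :=
      (hf y).hasFDerivAt.neg.cexp
    have h2 : HasFDerivAt (fun y => Complex.exp (-(f y)) * g y) _ y := h1.mul (hg y).hasFDerivAt
    rw [h2.fderiv, smul_sub, smul_neg, smul_neg, smul_comm (g y),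
      sub_eq_add_neg]
  rw [e]
  apply key
  refine (SchwartzMap.fderivCLM ℝ (Euc d) ℂ g).integrable.sub ?_
  exact (SchwartzMap.fderivCLM ℝ (Euc d) ℂ f).integrable.bdd_smul Bg
    g.continuous.aestronglyMeasurable (Filter.Eventually.of_forall hBg)

/-- `‖∇(e^{-φ} w)‖_{H^s} ≤ 𝒞(‖φ‖_{H^{s+1}}) ‖∇w‖_{H^s}`. -/
theorem statement9 (d s : ℕ) (hd : 3 ≤ d) (hs : (d : ℝ) / 2 < s) :
    ∃ C : ℝ → ℝ, ∀ (φ : 𝓢(Euc d, ℝ)) (w : Fin d → 𝓢(Euc d, ℂ)),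
      Real.sqrt (∑ i, ∑ j, hNormSq d s
          (pd d i (fun y => Complex.exp (-(φ y : ℂ)) * w j y)))
        ≤ C (hNorm d ((s : ℝ) + 1) (fun x => (φ x : ℂ))) *
          Real.sqrt (∑ i, ∑ j, hNormSq d s (pd d i (w j))) := by
  set K : ℝ≥0∞ := (2 ^ (s + 1)) ^ 2 * 8 * K1 d s with hK
  have hKt : K ≠ ∞ := by
    refine ENNReal.mul_ne_top ?_ (K1_ne_top d s hd hs)
    finiteness
  refine ⟨fun h => Real.sqrt ((ec 1 * ec (K * ENNReal.ofReal (h ^ 2))).toReal), fun φ w => ?_⟩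
  set f : 𝓢(Euc d, ℂ) := φ.postcompCLM Complex.ofRealCLM with hf
  have hfφ : (f : Euc d → ℂ) = fun x => (φ x : ℂ) := by
    ext x; simp [hf]
  have hfψ : ∀ x, (φ x : ℂ) = f x := fun x => by rw [hfφ]
  rw [← hfφ]
  simp only [hfψ]
  set h := hNorm d ((s : ℝ) + 1) f with hh
  set Y := ec 1 * ec (K * ENNReal.ofReal (h ^ 2)) with hY
  have hYt : Y ≠ ∞ := ENNReal.mul_ne_top (ec_ne_top (by simp))
    (ec_ne_top (ENNReal.mul_ne_top hKt (by simp)))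
  have hEw : ∀ g : 𝓢(Euc d, ℂ), E2 d s (𝓕 (g : Euc d → ℂ)) ≠ ∞ := fun g =>
    ne_top_of_le_ne_top ENNReal.ofReal_ne_top (E2_le_hNorm d s g)
  rw [← Real.sqrt_mul ENNReal.toReal_nonneg]
  apply Real.sqrt_le_sqrt
  rw [Finset.sum_comm, Finset.sum_comm (f := fun i j => hNormSq d s (pd d i (w j))),
    Finset.mul_sum]
  apply Finset.sum_le_sum
  intro j _
  have hb : E2 d s (𝓕 (fun y => Complex.exp (-(f y)) * w j y)) ≤
      Y * E2 d s (𝓕 (w j : Euc d → ℂ)) := by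
    refine (E2_exp d s hd f (w j)).trans ?_
    rw [hY]
    gcongr
    unfold ec
    gcongr
    exact E2_le_hNorm d s f
  have hbt := ENNReal.mul_ne_top hYt (hEw (w j))
  obtain ⟨r1, r2, r3⟩ := exp_reg d f (w j)
  rw [grad_eq d s r1 r2 r3 (ne_top_of_le_ne_top hbt hb),
    grad_eq d s (w j).integrable (w j).differentiable
      (SchwartzMap.fderivCLM ℝ (Euc d) ℂ (w j)).integrable (hEw (w j))]
  have := ENNReal.toReal_mono hbt hb
  rw [ENNReal.toReal_mul] at this
  calc _ ≤ (2 * π) ^ 2 * (Y.toReal * (E2 d s (𝓕 (w j : Euc d → ℂ))).toReal) := by gcongr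
    _ = _ := by ring
end
end
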